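/- arXiv:1009.5187 — 2 statements merged into one kernel-verified Lean document; each statement's English description precedes it below -/
import Mathlib

section
/- Let 1 < p < ∞, 1 ≤ r ≤ 2, r ≤ t < ∞ with (r < 2 or t > r). There exists a constant C such that for every discrete Littlewood–Paley family (f_i)_{i∈ℤ} and every jump collection (N_k)_{k≥0}, one has ‖ (Σ_{k≥1} |Σ_{N_{k−1}(x) < i ≤ N_k(x)} f_i(x)|^t)^{1/t} ‖_{L^p(dx)} ≤ C ‖ (Σ_{i∈ℤ} |f_i|^r)^{1/r} ‖_{L^p(ℝ)}. (For t > r this is Lépingle's inequality; for t = r, r < 2, it is Pisier and Xu's inequality.) -/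
open MeasureTheory ENNReal
open scoped NNReal

noncomputable section

/-- A jump collection: a sequence of measurable integer-valued functions on `ℝ`,
nondecreasing in the index. -/
def IsJumpCollection (Nk : ℕ → ℝ → ℤ) : Prop :=
  (∀ k, Measurable (Nk k)) ∧ ∀ (k : ℕ) (x : ℝ), Nk k x ≤ Nk (k + 1) x

/-- The dyadic interval `[m 2^(-i), (m+1) 2^(-i))`. -/
def dyadicInterval (i m : ℤ) : Set ℝ :=
  Set.Ico ((m : ℝ) * (2 : ℝ) ^ (-i)) (((m : ℝ) + 1) * (2 : ℝ) ^ (-i))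

/-- A discrete Littlewood–Paley family: each `f i` is locally integrable, constant on
every dyadic interval of length `2^(-i)`, and has integral zero over every dyadic
interval of length `2^(1-i)`. -/
def IsDiscLPFamily (f : ℤ → ℝ → ℝ) : Prop :=
  (∀ i, LocallyIntegrable (f i)) ∧
  (∀ i m : ℤ, ∀ x ∈ dyadicInterval i m, ∀ y ∈ dyadicInterval i m, f i x = f i y) ∧
  (∀ i m : ℤ, ∫ x in dyadicInterval (i - 1) m, f i x = 0)

namespace LPX

/-- index of the dyadic cell of length `2^(-n)` containing `x` -/
def cell (n : ℤ) (x : ℝ) : ℤ := ⌊x * (2 : ℝ) ^ n⌋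

lemma cell_succ (n : ℤ) (x : ℝ) : cell n x = cell (n + 1) x / 2 := by
  unfold cell
  have h : x * (2 : ℝ) ^ n = (x * (2 : ℝ) ^ (n + 1)) / ((2 : ℕ) : ℝ) := by
    rw [zpow_add₀ (by norm_num)]
    push_cast
    ring
  rw [h, Int.floor_div_natCast]
  rfl

lemma mem_dyadic (i m : ℤ) (x : ℝ) : x ∈ dyadicInterval i m ↔ cell i x = m := by
  unfold dyadicInterval cell
  have h2 : (0 : ℝ) < 2 ^ i := by positivity
  rw [Set.mem_Ico, Int.floor_eq_iff, zpow_neg, ← div_eq_mul_inv, ← div_eq_mul_inv,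
    div_le_iff₀ h2, lt_div_iff₀ h2]

lemma cell_mono {n m : ℤ} (h : n ≤ m) {x y : ℝ} (hxy : cell m x = cell m y) :
    cell n x = cell n y := by
  obtain ⟨k, rfl⟩ := Int.le.dest h
  induction k with
  | zero => simpa using hxy
  | succ k ih =>
    apply ih (by omega)
    rw [cell_succ _ x, cell_succ _ y]
    push_cast at hxy
    rw [← add_assoc] at hxy
    rw [hxy]

/-- representative of a cell -/
def rep (n m : ℤ) : ℝ := (m : ℝ) * (2 : ℝ) ^ (-n)

lemma cell_rep (n m : ℤ) : cell n (rep n m) = m := by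
  unfold cell rep
  rw [mul_assoc, ← zpow_add₀ (by norm_num)]
  simp

lemma measurable_cell (n : ℤ) : Measurable (cell n) := by
  unfold cell
  exact Int.measurable_floor.comp (measurable_id.mul_const _)

lemma factor {β : Type*} {n : ℤ} {h : ℝ → β} (hh : ∀ x y, cell n x = cell n y → h x = h y) :
    h = fun x => h (rep n (cell n x)) := by
  funext x
  exact hh _ _ (by rw [cell_rep])

lemma measurable_of_cell {β : Type*} [MeasurableSpace β] {n : ℤ} {h : ℝ → β}
    (hh : ∀ x y, cell n x = cell n y → h x = h y) : Measurable h := by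
  rw [factor hh]
  exact (Measurable.of_discrete (f := fun m : ℤ => h (rep n m))).comp (measurable_cell n)

lemma volume_dyadic (n m : ℤ) : volume (dyadicInterval n m) = ENNReal.ofReal ((2 : ℝ) ^ (-n)) := by
  unfold dyadicInterval
  rw [Real.volume_Ico]
  congr 1
  ring

lemma lintegral_cell {n : ℤ} {h : ℝ → ℝ≥0∞} (hh : ∀ x y, cell n x = cell n y → h x = h y) :
    ∫⁻ x, h x = ∑' m : ℤ, h (rep n m) * ENNReal.ofReal ((2 : ℝ) ^ (-n)) := by
  conv_lhs => rw [factor hh]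
  rw [← lintegral_map (f := fun m : ℤ => h (rep n m)) (Measurable.of_discrete) (measurable_cell n),
    lintegral_countable']
  congr 1
  funext m
  rw [Measure.map_apply (measurable_cell n) (MeasurableSet.singleton m), ← volume_dyadic n m]
  congr 2
  ext x
  rw [mem_dyadic]
  rfl

/-- swap of siblings -/
def sib (m : ℤ) : ℤ := if m % 2 = 0 then m + 1 else m - 1

lemma sib_sib (m : ℤ) : sib (sib m) = m := by
  unfold sib
  split_ifs <;> omega

lemma sib_div (m : ℤ) : sib m / 2 = m / 2 := by
  unfold sib
  split_ifs <;> omega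

/-- `d` is a Haar layer: constant at level `i+1`, antisymmetric inside level `i`. -/
def Layer (i : ℤ) (d : ℝ → ℝ) : Prop :=
  (∀ x y, cell (i + 1) x = cell (i + 1) y → d x = d y) ∧
  (∀ x y, cell (i + 1) y = sib (cell (i + 1) x) → d y = - d x)

lemma Layer.abs {i : ℤ} {d : ℝ → ℝ} (hd : Layer i d) {x y : ℝ} (h : cell i x = cell i y) :
    |d x| = |d y| := by
  by_cases h1 : cell (i + 1) x = cell (i + 1) y
  · rw [hd.1 x y h1]
  · rw [hd.2 x y, abs_neg]
    rw [cell_succ i x, cell_succ i y] at h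
    unfold sib
    split_ifs <;> omega

lemma layer_step {i : ℤ} {d : ℝ → ℝ} (hd : Layer i d) {α : Type*} {A : ℝ → α}
    (hA : ∀ x y, cell i x = cell i y → A x = A y) (G H : α → ℝ → ℝ≥0∞)
    (hGH : ∀ a δ, G a δ + G a (-δ) ≤ 2 * H a δ) :
    ∫⁻ x, G (A x) (d x) ≤ ∫⁻ x, H (A x) (d x) := by
  have hA' : ∀ x y, cell (i + 1) x = cell (i + 1) y → A x = A y := fun x y h =>
    hA x y (by rw [cell_succ i x, cell_succ i y, h])
  have hG : ∫⁻ x, G (A x) (d x) = ∑' m : ℤ, G (A (rep (i+1) m)) (d (rep (i+1) m)) *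
      ENNReal.ofReal ((2 : ℝ) ^ (-(i+1))) :=
    lintegral_cell (n := i + 1) (h := fun x => G (A x) (d x))
      (fun x y h => by simp only [hA' x y h, hd.1 x y h])
  have hH : ∫⁻ x, H (A x) (d x) = ∑' m : ℤ, H (A (rep (i+1) m)) (d (rep (i+1) m)) *
      ENNReal.ofReal ((2 : ℝ) ^ (-(i+1))) :=
    lintegral_cell (n := i + 1) (h := fun x => H (A x) (d x))
      (fun x y h => by simp only [hA' x y h, hd.1 x y h])
  let e : ℤ ≃ ℤ := ⟨sib, sib, sib_sib, sib_sib⟩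
  have hG2 : ∫⁻ x, G (A x) (d x) = ∑' m : ℤ, G (A (rep (i+1) m)) (-d (rep (i+1) m)) *
      ENNReal.ofReal ((2 : ℝ) ^ (-(i+1))) := by
    rw [hG, ← Equiv.tsum_eq e]
    congr 1
    funext m
    have h1 : A (rep (i+1) (e m)) = A (rep (i+1) m) := by
      apply hA
      rw [cell_succ i, cell_succ i, cell_rep, cell_rep]
      exact sib_div m
    have h2 : d (rep (i+1) (e m)) = - d (rep (i+1) m) := by
      apply hd.2
      rw [cell_rep, cell_rep]
      rfl
    rw [h1, h2]
  have key : 2 * ∫⁻ x, G (A x) (d x) ≤ 2 * ∫⁻ x, H (A x) (d x) := by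
    rw [two_mul]
    nth_rw 1 [hG]
    rw [hG2, hH, ← ENNReal.tsum_add, ← ENNReal.tsum_mul_left]
    refine ENNReal.tsum_le_tsum fun m => ?_
    rw [← add_mul, ← mul_assoc]
    gcongr
    exact hGH _ _
  exact (ENNReal.mul_le_mul_iff_right (by norm_num) (by norm_num)).1 key

lemma layer_of_LP {f : ℤ → ℝ → ℝ} (hf : IsDiscLPFamily f) (i : ℤ) : Layer i (f (i + 1)) := by
  obtain ⟨h1, h2, h3⟩ := hf
  have hc : ∀ x y, cell (i + 1) x = cell (i + 1) y → f (i+1) x = f (i+1) y := fun x y h =>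
    h2 (i+1) (cell (i+1) x) x ((mem_dyadic _ _ _).2 rfl) y ((mem_dyadic _ _ _).2 h.symm)
  have hset : ∀ m, ∫ x in dyadicInterval (i+1) m, f (i+1) x
      = (2:ℝ)^(-(i+1)) * f (i+1) (rep (i+1) m) := by
    intro m
    have : ∫ x in dyadicInterval (i+1) m, f (i+1) x
        = ∫ x in dyadicInterval (i+1) m, f (i+1) (rep (i+1) m) := by
      apply setIntegral_congr_fun
      · exact measurableSet_Ico
      · intro x hx
        apply hc
        rw [cell_rep]
        exact (mem_dyadic _ _ _).1 hx
    rw [this, setIntegral_const, measureReal_def, volume_dyadic, ENNReal.toReal_ofReal (by positivity)]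
    simp
  have hsum : ∀ m, f (i+1) (rep (i+1) (2*m)) + f (i+1) (rep (i+1) (2*m+1)) = 0 := by
    intro m
    have h := h3 (i+1) m
    have hu : dyadicInterval (i + 1 - 1) m
        = dyadicInterval (i+1) (2*m) ∪ dyadicInterval (i+1) (2*m+1) := by
      ext x
      rw [Set.mem_union, mem_dyadic, mem_dyadic, mem_dyadic, add_sub_cancel_right, cell_succ]
      omega
    have hIntg : ∀ m, IntegrableOn (f (i+1)) (dyadicInterval (i+1) m) := fun m =>
      ((h1 (i+1)).integrableOn_isCompact isCompact_Icc).mono_set Set.Ico_subset_Icc_self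
    have hms : MeasurableSet (dyadicInterval (i+1) (2*m+1)) := measurableSet_Ico
    rw [hu, setIntegral_union _ hms (hIntg _) (hIntg _), hset, hset, ← mul_add] at h
    · exact (mul_eq_zero.1 h).resolve_left (by positivity)
    · rw [Set.disjoint_left]
      intro x
      rw [mem_dyadic, mem_dyadic]
      omega
  refine ⟨hc, fun x y h => ?_⟩
  have hx := hc x (rep (i+1) (cell (i+1) x)) (by rw [cell_rep])
  have hy := hc y (rep (i+1) (cell (i+1) y)) (by rw [cell_rep])
  rw [hx, hy, h]
  unfold sib
  split_ifs with hm
  · have := hsum (cell (i+1) x / 2)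
    rw [show 2 * (cell (i+1) x / 2) = cell (i+1) x by omega] at this
    linarith
  · have := hsum (cell (i+1) x / 2)
    rw [show 2 * (cell (i+1) x / 2) + 1 = cell (i+1) x by omega,
      show 2 * (cell (i+1) x / 2) = cell (i+1) x - 1 by omega] at this
    linarith

/-- partial sums -/
def PS (a : ℕ → ℝ) (n : ℕ) : ℝ := ∑ i ∈ Finset.range n, a i

/-- `t`-variation of the partial sums of a path of differences -/
def W (t : ℝ) (a : ℕ → ℝ) : ℝ≥0∞ :=
  ⨆ (N : {N : ℕ → ℕ // Monotone N}) (M : ℕ),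
    (∑ k ∈ Finset.range M, ENNReal.ofReal |PS a (N.1 (k + 1)) - PS a (N.1 k)| ^ t) ^ (1 / t)

/-- truncation of a path -/
def trunc (n : ℕ) (a : ℕ → ℝ) : ℕ → ℝ := fun i => if i < n then a i else 0

lemma PS_trunc (n m : ℕ) (a : ℕ → ℝ) : PS (trunc n a) m = PS a (min m n) := by
  unfold PS trunc
  rw [Finset.sum_ite, Finset.sum_const_zero, add_zero]
  apply Finset.sum_congr _ (fun _ _ => rfl)
  ext i
  simp

lemma le_W {t : ℝ} {a : ℕ → ℝ} {N : ℕ → ℕ} (hN : Monotone N) (M : ℕ) :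
    (∑ k ∈ Finset.range M, ENNReal.ofReal |PS a (N (k + 1)) - PS a (N k)| ^ t) ^ (1 / t) ≤ W t a :=
  le_iSup₂_of_le (⟨N, hN⟩ : {N : ℕ → ℕ // Monotone N}) M le_rfl

lemma W_trunc_le (t : ℝ) (a : ℕ → ℝ) (n : ℕ) : W t (trunc n a) ≤ W t a := by
  refine iSup₂_le fun N M => ?_
  simp only [PS_trunc]
  exact le_W (N := fun k => min (N.1 k) n) (fun i j h => min_le_min_right _ (N.2 h)) M

lemma trunc_trunc {n m : ℕ} (h : n ≤ m) (a : ℕ → ℝ) : trunc n (trunc m a) = trunc n a := by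
  funext i
  unfold trunc
  split_ifs <;> first | rfl | omega

lemma W_trunc_mono (t : ℝ) (a : ℕ → ℝ) {n m : ℕ} (h : n ≤ m) :
    W t (trunc n a) ≤ W t (trunc m a) := by
  rw [← trunc_trunc h]
  exact W_trunc_le _ _ _

lemma PS_add (a b : ℕ → ℝ) (n : ℕ) : PS (a + b) n = PS a n + PS b n := by
  simp [PS, Finset.sum_add_distrib]

lemma W_add_le {t : ℝ} (ht : 1 ≤ t) (a b : ℕ → ℝ) : W t (a + b) ≤ W t a + W t b := by
  refine iSup₂_le fun N M => ?_
  refine le_trans ?_ (add_le_add (le_W N.2 M) (le_W N.2 M))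
  refine le_trans ?_ (ENNReal.Lp_add_le _ _ _ ht)
  apply ENNReal.rpow_le_rpow _ (by positivity)
  refine Finset.sum_le_sum fun k _ => ?_
  apply ENNReal.rpow_le_rpow _ (by linarith)
  rw [← ENNReal.ofReal_add (abs_nonneg _) (abs_nonneg _)]
  apply ENNReal.ofReal_le_ofReal
  rw [PS_add, PS_add]
  refine le_trans (le_of_eq ?_) (abs_add_le _ _)
  congr 1
  ring

lemma sum_rpow_le {t : ℝ} (ht : 1 ≤ t) (s : Finset ℕ) (u : ℕ → ℝ≥0∞) :
    (∑ k ∈ s, u k ^ t) ^ (1 / t) ≤ ∑ k ∈ s, u k := by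
  classical
  induction s using Finset.induction_on with
  | empty => simp; linarith
  | insert k s hk ih =>
    rw [Finset.sum_insert hk, Finset.sum_insert hk]
    have h0 : (∑ k ∈ s, u k ^ t) = ((∑ k ∈ s, u k ^ t) ^ (1 / t)) ^ t := by
      rw [← ENNReal.rpow_mul, one_div, inv_mul_cancel₀ (by linarith), ENNReal.rpow_one]
    rw [h0]
    exact (ENNReal.rpow_add_rpow_le_add _ _ ht).trans (add_le_add le_rfl ih)

lemma PS_sub {a : ℕ → ℝ} {n m : ℕ} (h : n ≤ m) : PS a m - PS a n = ∑ i ∈ Finset.Ico n m, a i := by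
  unfold PS
  rw [Finset.sum_Ico_eq_sub _ h]

/-- for paths the variation is dominated by the `ℓ¹` norm -/
lemma W_le_sum {t : ℝ} (ht : 1 ≤ t) (a : ℕ → ℝ) (K : ℕ) (ha : ∀ n, K ≤ n → a n = 0) :
    W t a ≤ ∑ i ∈ Finset.range K, ENNReal.ofReal |a i| := by
  refine iSup₂_le fun N M => ?_
  refine (sum_rpow_le ht _ _).trans ?_
  have hb : ∀ k, ENNReal.ofReal |PS a (N.1 (k + 1)) - PS a (N.1 k)|
      ≤ ENNReal.ofReal (PS (fun i => |a i|) (N.1 (k+1)) - PS (fun i => |a i|) (N.1 k)) := by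
    intro k
    apply ENNReal.ofReal_le_ofReal
    rw [PS_sub (N.2 (Nat.le_succ k)), PS_sub (N.2 (Nat.le_succ k))]
    exact Finset.abs_sum_le_sum_abs _ _
  refine (Finset.sum_le_sum fun k _ => hb k).trans ?_
  rw [← ENNReal.ofReal_sum_of_nonneg, Finset.sum_range_sub (fun k => PS (fun i => |a i|) (N.1 k)),
    ← ENNReal.ofReal_sum_of_nonneg (fun _ _ => abs_nonneg _)]
  · apply ENNReal.ofReal_le_ofReal
    have h1 : 0 ≤ PS (fun i => |a i|) (N.1 0) := Finset.sum_nonneg fun _ _ => abs_nonneg _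
    have h2 : PS (fun i => |a i|) (N.1 M) ≤ ∑ i ∈ Finset.range K, |a i| := by
      unfold PS
      have : ∑ i ∈ Finset.range (N.1 M), |a i| ≤ ∑ i ∈ Finset.range (N.1 M + K), |a i| :=
        Finset.sum_le_sum_of_subset_of_nonneg (by simp) (fun _ _ _ => abs_nonneg _)
      refine this.trans (le_of_eq ?_)
      symm
      apply Finset.sum_subset (by simp)
      intro i _ hi
      rw [ha i (by simpa using hi), abs_zero]
    linarith
  · intro k _
    rw [PS_sub (N.2 (Nat.le_succ k))]
    exact Finset.sum_nonneg fun _ _ => abs_nonneg _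

lemma W_zero (t : ℝ) (ht : 1 ≤ t) : W t (fun _ => 0) = 0 := by
  have := W_le_sum ht (fun _ => 0) 0 (fun _ _ => rfl)
  simpa using this

lemma W_single {t : ℝ} (ht : 1 ≤ t) (n : ℕ) (c : ℝ) :
    W t (fun i => if i = n then c else 0) ≤ ENNReal.ofReal |c| := by
  refine (W_le_sum ht _ (n + 1) (fun m hm => if_neg (by omega))).trans ?_
  rw [Finset.sum_eq_single n]
  · simp
  · intro i _ hi
    simp [hi]
  · simp

/-- pathwise good-lambda step -/
lemma good_path {t : ℝ} (ht : 1 ≤ t) (a b : ℕ → ℝ) (K : ℕ) (ha : ∀ n, K ≤ n → a n = 0)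
    (l : ℝ≥0∞) (hW : 3 * l < W t a) (hs : ∀ n, ENNReal.ofReal |a n| ≤ l)
    (hb : ∀ n, b n = if l < W t (trunc n a) then a n else 0) : l < W t b := by
  classical
  have hK : trunc K a = a := by
    funext i
    unfold trunc
    split_ifs with h
    · rfl
    · exact (ha i (by omega)).symm
  have hl3 : l ≤ 3 * l := by
    calc l = 1 * l := (one_mul l).symm
      _ ≤ 3 * l := by gcongr; norm_num
  have hex : ∃ n, l < W t (trunc n a) := ⟨K, by rw [hK]; exact lt_of_le_of_lt hl3 hW⟩
  obtain ⟨T, hT⟩ : ∃ T, T = Nat.find hex := ⟨_, rfl⟩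
  have hT1 : l < W t (trunc T a) := hT ▸ Nat.find_spec hex
  have hT2 : ∀ m < T, W t (trunc m a) ≤ l := fun m hm =>
    not_lt.1 (Nat.find_min hex (hT ▸ hm))
  have hT0 : T ≠ 0 := by
    rintro rfl
    have : trunc 0 a = fun _ => 0 := by funext i; simp [trunc]
    rw [this, W_zero t ht] at hT1
    exact not_lt_bot hT1
  obtain ⟨T, rfl⟩ := Nat.exists_eq_succ_of_ne_zero hT0
  have hdec : a = (trunc T a + fun i => if i = T then a T else 0) + b := by
    funext i
    simp only [Pi.add_apply, hb, trunc]
    by_cases h1 : i < T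
    · rw [if_pos h1, if_neg (by omega), if_neg]
      · simp
      · rw [not_lt]; exact hT2 i (by omega)
    · by_cases h2 : i = T
      · subst h2
        rw [if_neg h1, if_pos rfl, if_neg]
        · simp
        · rw [not_lt]; exact hT2 i (by omega)
      · rw [if_neg h1, if_neg h2, if_pos]
        · simp
        · exact hT1.trans_le (W_trunc_mono t a (by omega))
  have h1 : W t a ≤ l + l + W t b := by
    conv_lhs => rw [hdec]
    refine (W_add_le ht _ _).trans (add_le_add ?_ le_rfl)
    refine (W_add_le ht _ _).trans (add_le_add (hT2 T (by omega)) ?_)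
    exact (W_single ht T _).trans (hs T)
  by_contra hcon
  rw [not_lt] at hcon
  have : W t a ≤ 3 * l := by
    refine h1.trans ?_
    calc l + l + W t b ≤ l + l + l := by gcongr
      _ = 3 * l := by ring
  exact absurd hW (not_lt.2 this)

/-- one step of the greedy jump counter with threshold `θ` -/
def gstep (θ : ℝ) (s : ℝ × ℕ) (d : ℝ) : ℝ × ℕ :=
  if θ ≤ |s.1 + d| then (0, s.2 + 1) else (s.1 + d, s.2)

/-- greedy jump counter -/
def grd (θ : ℝ) (a : ℕ → ℝ) : ℕ → ℝ × ℕ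
  | 0 => (0, 0)
  | n + 1 => gstep θ (grd θ a n) (a n)

lemma grd_congr (θ : ℝ) {a b : ℕ → ℝ} (n : ℕ) (h : ∀ i < n, a i = b i) : grd θ a n = grd θ b n := by
  induction n with
  | zero => rfl
  | succ n ih =>
    simp only [grd]
    rw [ih (fun i hi => h i (by omega)), h n (by omega)]

lemma grd_abs {θ : ℝ} (hθ : 0 < θ) (a : ℕ → ℝ) (n : ℕ) : |(grd θ a n).1| < θ := by
  cases n with
  | zero => simpa [grd] using hθ
  | succ n =>
    simp only [grd, gstep]
    split_ifs with h
    · simpa using hθ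
    · exact not_le.1 h

lemma grd_mono_succ (θ : ℝ) (a : ℕ → ℝ) (n : ℕ) : (grd θ a n).2 ≤ (grd θ a (n+1)).2 := by
  simp only [grd, gstep]
  split_ifs <;> simp

lemma grd_mono (θ : ℝ) (a : ℕ → ℝ) : Monotone (fun n => (grd θ a n).2) :=
  monotone_nat_of_le_succ (grd_mono_succ θ a)

lemma grd_same (θ : ℝ) (a : ℕ → ℝ) (n k : ℕ) (h : (grd θ a (n + k)).2 = (grd θ a n).2) :
    (grd θ a (n + k)).1 - (grd θ a n).1 = PS a (n + k) - PS a n := by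
  induction k with
  | zero => simp
  | succ k ih =>
    have h1 := grd_mono θ a (Nat.le_add_right n k)
    have h2 := grd_mono_succ θ a (n + k)
    simp only at h1
    rw [← add_assoc] at h ⊢
    have h3 : (grd θ a (n + k)).2 = (grd θ a n).2 := by omega
    have ih := ih h3
    have h4 : PS a (n + k + 1) = PS a (n + k) + a (n + k) := Finset.sum_range_succ _ _
    rw [h4]
    have h5 : (grd θ a (n + k + 1)).1 = (grd θ a (n + k)).1 + a (n + k) := by
      simp only [grd, gstep] at h ⊢
      split_ifs at h ⊢ with hc
      · simp at h; omega
      · rfl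
    rw [h5]
    linarith

lemma grd_jump {θ : ℝ} (hθ : 0 < θ) (a : ℕ → ℝ) {n m : ℕ} (hnm : n ≤ m)
    (hj : 2 * θ ≤ |PS a m - PS a n|) : (grd θ a n).2 + 1 ≤ (grd θ a m).2 := by
  obtain ⟨k, rfl⟩ := Nat.exists_eq_add_of_le hnm
  by_contra hcon
  have h1 := grd_mono θ a (Nat.le_add_right n k)
  simp only at h1
  have h2 := grd_same θ a n k (by omega)
  rw [← h2] at hj
  have h3 := grd_abs hθ a (n + k)
  have h4 := grd_abs hθ a n
  have h5 := abs_sub (grd θ a (n + k)).1 (grd θ a n).1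
  linarith

lemma grd_count {θ : ℝ} (hθ : 0 < θ) (a : ℕ → ℝ) {N : ℕ → ℕ} (hN : Monotone N) (M : ℕ) :
    (∑ k ∈ Finset.range M, if 2 * θ ≤ |PS a (N (k+1)) - PS a (N k)| then 1 else 0)
      ≤ (grd θ a (N M)).2 := by
  induction M with
  | zero => simp
  | succ M ih =>
    rw [Finset.sum_range_succ]
    split_ifs with h
    · have := grd_jump hθ a (hN (Nat.le_succ M)) h
      simp only [Nat.succ_eq_add_one] at this
      omega
    · have := grd_mono θ a (hN (Nat.le_succ M))
      simp only [Nat.succ_eq_add_one] at this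
      omega

lemma grd_stable {θ : ℝ} (hθ : 0 < θ) (a : ℕ → ℝ) (K : ℕ) (ha : ∀ n, K ≤ n → a n = 0) (n : ℕ) :
    (grd θ a n).2 ≤ (grd θ a K).2 := by
  rcases le_total n K with h | h
  · exact grd_mono θ a h
  · induction n, h using Nat.le_induction with
    | base => exact le_rfl
    | succ n hn ih =>
      refine le_trans (le_of_eq ?_) ih
      have := grd_abs hθ a n
      simp only [grd, gstep, ha n hn, add_zero]
      rw [if_neg (not_le.2 this)]

/-- potential -/
def U (θ y : ℝ) : ℝ := √(θ ^ 2 + y ^ 2) - θ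

/-- increment bound -/
def mm (θ d : ℝ) : ℝ := min |d| (d ^ 2 / θ)

lemma U_nonneg {θ : ℝ} (hθ : 0 < θ) (y : ℝ) : 0 ≤ U θ y := by
  unfold U
  have : θ ≤ √(θ ^ 2 + y ^ 2) := Real.le_sqrt_of_sq_le (by nlinarith [sq_nonneg y])
  linarith

lemma mm_nonneg {θ : ℝ} (hθ : 0 < θ) (d : ℝ) : 0 ≤ mm θ d :=
  le_min (abs_nonneg _) (by positivity)

lemma U_big {θ : ℝ} (hθ : 0 < θ) {y : ℝ} (h : θ ≤ |y|) : θ / 4 ≤ U θ y := by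
  unfold U
  have : θ / 4 + θ ≤ √(θ ^ 2 + y ^ 2) := by
    apply Real.le_sqrt_of_sq_le
    have : θ ^ 2 ≤ y ^ 2 := by rw [← sq_abs y]; gcongr
    nlinarith
  linarith

lemma U_step {θ : ℝ} (hθ : 0 < θ) (y d : ℝ) :
    U θ (y + d) + U θ (y - d) ≤ 2 * (U θ y + mm θ d) := by
  unfold U
  set A := √(θ ^ 2 + (y + d) ^ 2) with hA
  set B := √(θ ^ 2 + (y - d) ^ 2) with hB
  set Z := √(θ ^ 2 + y ^ 2) with hZ
  have hA2 : A ^ 2 = θ ^ 2 + (y + d) ^ 2 := Real.sq_sqrt (by positivity)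
  have hB2 : B ^ 2 = θ ^ 2 + (y - d) ^ 2 := Real.sq_sqrt (by positivity)
  have hZ2 : Z ^ 2 = θ ^ 2 + y ^ 2 := Real.sq_sqrt (by positivity)
  have hA0 : 0 ≤ A := Real.sqrt_nonneg _
  have hB0 : 0 ≤ B := Real.sqrt_nonneg _
  have hZ0 : θ ≤ Z := Real.le_sqrt_of_sq_le (by nlinarith [sq_nonneg y])
  have hm : Z ^ 2 + d ^ 2 ≤ (Z + mm θ d) ^ 2 := by
    unfold mm
    rcases min_cases |d| (d ^ 2 / θ) with ⟨h, _⟩ | ⟨h, _⟩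
    · rw [h]
      nlinarith [sq_abs d, abs_nonneg d]
    · rw [h]
      have h1 : d ^ 2 / θ * θ = d ^ 2 := by field_simp
      have h2 : 0 ≤ d ^ 2 / θ := by positivity
      nlinarith
  have hm0 := mm_nonneg hθ d
  have : A + B ≤ 2 * (Z + mm θ d) := by
    apply abs_le_of_sq_le_sq' _ (by linarith) |>.2
    nlinarith [sq_nonneg (A - B)]
  linarith

/-- potential of the greedy counter -/
def Phi (θ : ℝ) (s : ℝ × ℕ) : ℝ := U θ s.1 + θ / 4 * s.2

lemma Phi_gstep {θ : ℝ} (hθ : 0 < θ) (s : ℝ × ℕ) (d : ℝ) :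
    Phi θ (gstep θ s d) ≤ U θ (s.1 + d) + θ / 4 * s.2 := by
  unfold Phi gstep
  split_ifs with h
  · have h1 := U_big hθ h
    have h2 : U θ 0 = 0 := by
      unfold U
      rw [zero_pow (by norm_num), add_zero, Real.sqrt_sq hθ.le, sub_self]
    simp only [h2]
    push_cast
    linarith
  · simp

/-- Haar family starting at level `ℓ` -/
def Haar (ℓ : ℤ) (F : ℕ → ℝ → ℝ) : Prop := ∀ n : ℕ, Layer (ℓ + n) (F n)

lemma Haar.const {ℓ : ℤ} {F : ℕ → ℝ → ℝ} (hF : Haar ℓ F) {n : ℕ} {x y : ℝ}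
    (h : cell (ℓ + n) x = cell (ℓ + n) y) : ∀ i < n, F i x = F i y := fun i hi =>
  (hF i).1 x y (cell_mono (by omega) h)

lemma Haar.measurable {ℓ : ℤ} {F : ℕ → ℝ → ℝ} (hF : Haar ℓ F) (n : ℕ) : Measurable (F n) :=
  measurable_of_cell (hF n).1

lemma grd_measurable {ℓ : ℤ} {F : ℕ → ℝ → ℝ} (hF : Haar ℓ F) (θ : ℝ) (n : ℕ) :
    Measurable (fun x => grd θ (fun i => F i x) n) :=
  measurable_of_cell (n := ℓ + n) (fun _ _ h => grd_congr θ n (hF.const h))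

lemma count_integral {ℓ : ℤ} {F : ℕ → ℝ → ℝ} (hF : Haar ℓ F) {θ : ℝ} (hθ : 0 < θ) (n : ℕ) :
    ∫⁻ x, ENNReal.ofReal (Phi θ (grd θ (fun i => F i x) n))
      ≤ ∑ i ∈ Finset.range n, ∫⁻ x, ENNReal.ofReal (mm θ (F i x)) := by
  induction n with
  | zero => 
    simp only [grd, Phi, U]
    rw [zero_pow (by norm_num), add_zero, Real.sqrt_sq hθ.le]
    simp
  | succ n ih =>
    rw [Finset.sum_range_succ]
    have hA : ∀ x y, cell (ℓ + n) x = cell (ℓ + n) y →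
        grd θ (fun i => F i x) n = grd θ (fun i => F i y) n :=
      fun _ _ h => grd_congr θ n (hF.const h)
    calc ∫⁻ x, ENNReal.ofReal (Phi θ (grd θ (fun i => F i x) (n + 1)))
        ≤ ∫⁻ x, ENNReal.ofReal (U θ ((grd θ (fun i => F i x) n).1 + F n x)
            + θ / 4 * (grd θ (fun i => F i x) n).2) :=
          lintegral_mono fun x => ENNReal.ofReal_le_ofReal (Phi_gstep hθ _ _)
      _ ≤ ∫⁻ x, ENNReal.ofReal (Phi θ (grd θ (fun i => F i x) n) + mm θ (F n x)) := by
          refine layer_step (hF n) hA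
            (fun s d => ENNReal.ofReal (U θ (s.1 + d) + θ / 4 * s.2))
            (fun s d => ENNReal.ofReal (Phi θ s + mm θ d)) ?_
          intro s d
          have h1 := U_nonneg hθ (s.1 + d)
          have h2 := U_nonneg hθ (s.1 + -d)
          have h3 : 0 ≤ θ / 4 * s.2 := by positivity
          rw [← ENNReal.ofReal_add (by linarith) (by linarith)]
          have : (2 : ℝ≥0∞) = ENNReal.ofReal 2 := by simp
          rw [this, ← ENNReal.ofReal_mul (by norm_num)]
          apply ENNReal.ofReal_le_ofReal
          have := U_step hθ s.1 d
          unfold Phi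
          rw [← sub_eq_add_neg]
          linarith
      _ = ∫⁻ x, (ENNReal.ofReal (Phi θ (grd θ (fun i => F i x) n))
            + ENNReal.ofReal (mm θ (F n x))) := by
          congr 1
          funext x
          apply ENNReal.ofReal_add _ (mm_nonneg hθ _)
          have := U_nonneg hθ (grd θ (fun i => F i x) n).1
          unfold Phi
          positivity
      _ = (∫⁻ x, ENNReal.ofReal (Phi θ (grd θ (fun i => F i x) n)))
            + ∫⁻ x, ENNReal.ofReal (mm θ (F n x)) := by
          apply lintegral_add_left
          exact measurable_of_cell (n := ℓ + n) (fun x y h => by rw [hA x y h])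
      _ ≤ _ := by gcongr

lemma count_integral' {ℓ : ℤ} {F : ℕ → ℝ → ℝ} (hF : Haar ℓ F) {θ : ℝ} (hθ : 0 < θ) (n : ℕ) :
    ∫⁻ x, ((grd θ (fun i => F i x) n).2 : ℝ≥0∞)
      ≤ ∑ i ∈ Finset.range n, ∫⁻ x, ENNReal.ofReal (4 / θ * mm θ (F i x)) := by
  have h := count_integral hF hθ n
  have h1 : ∫⁻ x, ((grd θ (fun i => F i x) n).2 : ℝ≥0∞) ≤
      ∫⁻ x, ENNReal.ofReal (4 / θ) * ENNReal.ofReal (Phi θ (grd θ (fun i => F i x) n)) := by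
    refine lintegral_mono fun x => ?_
    rw [← ENNReal.ofReal_mul (by positivity), ← ENNReal.ofReal_natCast]
    apply ENNReal.ofReal_le_ofReal
    have := U_nonneg hθ (grd θ (fun i => F i x) n).1
    unfold Phi
    have h2 : (4 / θ) * (θ / 4 * ((grd θ (fun i => F i x) n).2 : ℝ))
      = ((grd θ (fun i => F i x) n).2 : ℝ) := by field_simp
    rw [mul_add, h2]
    have : 0 ≤ 4 / θ * U θ (grd θ (fun i => F i x) n).1 := by positivity
    linarith
  refine h1.trans ?_
  rw [lintegral_const_mul' _ _ ENNReal.ofReal_ne_top]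
  refine (mul_le_mul_right h _).trans (le_of_eq ?_)
  rw [Finset.mul_sum]
  refine Finset.sum_congr rfl fun i _ => ?_
  rw [← lintegral_const_mul' _ _ ENNReal.ofReal_ne_top]
  congr 1
  funext x
  rw [ENNReal.ofReal_mul (by positivity)]

/-- summability condition on the exponents -/
def KH (r t : ℝ) (C : ℝ≥0) : Prop := ∀ u : ℝ, 0 ≤ u →
  ∑' j : ℕ, ENNReal.ofReal (((2:ℝ) ^ j) ^ (-t) * min (2 ^ j * u) ((2 ^ j * u) ^ 2))
    ≤ C * ENNReal.ofReal (u ^ r)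

/-- thresholds -/
def th (l : ℝ) (j : ℕ) : ℝ := l / (4 * 2 ^ j)

lemma th_pos {l : ℝ} (hl : 0 < l) (j : ℕ) : 0 < th l j := by unfold th; positivity

lemma layer_pt {t l : ℝ} (ht : 1 ≤ t) (hl : 0 < l) (D : ℝ) (hD : 0 ≤ D) :
    ENNReal.ofReal ((min (D / l) 1) ^ t) ≤
      ∑' j : ℕ, ENNReal.ofReal (((2:ℝ) ^ j) ^ (-t)) * (if 2 * th l j ≤ D then 1 else 0) := by
  rcases hD.eq_or_lt with h | h
  · rw [← h, zero_div, min_eq_left (by norm_num), Real.zero_rpow (by linarith)]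
    simp
  · have hw : 0 < min (D / l) 1 := lt_min (by positivity) one_pos
    obtain ⟨j, hj1, hj2⟩ := exists_nat_pow_near_of_lt_one hw (min_le_right _ _)
      (by norm_num : (0:ℝ) < 1/2) (by norm_num)
    refine le_trans ?_ (ENNReal.le_tsum j)
    rw [if_pos, mul_one]
    · apply ENNReal.ofReal_le_ofReal
      rw [Real.rpow_neg (by positivity), ← Real.inv_rpow (by positivity)]
      apply Real.rpow_le_rpow hw.le _ (by linarith)
      rwa [one_div, inv_pow] at hj2
    · have h1 : (1/2:ℝ)^(j+1) < D / l := hj1.trans_le (min_le_left _ _)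
      rw [lt_div_iff₀ hl] at h1
      refine le_trans (le_of_eq ?_) h1.le
      unfold th
      rw [pow_succ, one_div, inv_pow]
      field_simp
      norm_num

lemma path_count {t l : ℝ} (ht : 1 ≤ t) (hl : 0 < l) (a : ℕ → ℝ) (K : ℕ)
    (ha : ∀ n, K ≤ n → a n = 0) (hW : ENNReal.ofReal l < W t a) :
    1 ≤ ∑' j : ℕ, ENNReal.ofReal (((2:ℝ) ^ j) ^ (-t)) * ((grd (th l j) a K).2 : ℝ≥0∞) := by
  have ht0 : 0 < t := by linarith
  unfold W at hW
  rw [lt_iSup_iff] at hW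
  obtain ⟨⟨N, hN⟩, hW⟩ := hW
  rw [lt_iSup_iff] at hW
  obtain ⟨M, hW⟩ := hW
  simp only at hW
  set D : ℕ → ℝ := fun k => |PS a (N (k+1)) - PS a (N k)| with hD
  have hD0 : ∀ k, 0 ≤ D k := fun k => abs_nonneg _
  have h1 : l ^ t < ∑ k ∈ Finset.range M, D k ^ t := by
    have h2 : ENNReal.ofReal l ^ t < ∑ k ∈ Finset.range M, ENNReal.ofReal (D k) ^ t := by
      have := ENNReal.rpow_lt_rpow hW ht0
      rwa [← ENNReal.rpow_mul, one_div, inv_mul_cancel₀ ht0.ne', ENNReal.rpow_one] at this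
    simp only [ENNReal.ofReal_rpow_of_nonneg (hD0 _) ht0.le] at h2
    rw [ENNReal.ofReal_rpow_of_nonneg hl.le ht0.le, ← ENNReal.ofReal_sum_of_nonneg] at h2
    · exact (ENNReal.ofReal_lt_ofReal_iff_of_nonneg (by positivity)).1 h2
    · intro k _
      have := hD0 k
      positivity
  have h2 : 1 ≤ ∑ k ∈ Finset.range M, (min (D k / l) 1) ^ t := by
    have hnn : ∀ k, 0 ≤ (min (D k / l) 1) ^ t := fun k => by
      have := hD0 k
      positivity
    by_cases hex : ∃ k ∈ Finset.range M, 1 < D k / l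
    · obtain ⟨k, hk, hk1⟩ := hex
      refine le_trans ?_ (Finset.single_le_sum (fun k _ => hnn k) hk)
      rw [min_eq_right hk1.le, Real.one_rpow]
    · push Not at hex
      have h3 : ∑ k ∈ Finset.range M, (min (D k / l) 1) ^ t
          = (∑ k ∈ Finset.range M, D k ^ t) / l ^ t := by
        rw [Finset.sum_div]
        refine Finset.sum_congr rfl fun k hk => ?_
        rw [min_eq_left (hex k hk), Real.div_rpow (hD0 k) hl.le]
      rw [h3, le_div_iff₀ (by positivity), one_mul]
      exact h1.le
  calc (1 : ℝ≥0∞) = ENNReal.ofReal 1 := by simp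
    _ ≤ ENNReal.ofReal (∑ k ∈ Finset.range M, (min (D k / l) 1) ^ t) := ENNReal.ofReal_le_ofReal h2
    _ = ∑ k ∈ Finset.range M, ENNReal.ofReal ((min (D k / l) 1) ^ t) := by
        apply ENNReal.ofReal_sum_of_nonneg
        intro k _
        have := hD0 k
        positivity
    _ ≤ ∑ k ∈ Finset.range M, ∑' j : ℕ, ENNReal.ofReal (((2:ℝ) ^ j) ^ (-t)) *
          (if 2 * th l j ≤ D k then 1 else 0) := by
        exact Finset.sum_le_sum fun k _ => layer_pt ht hl _ (hD0 k)
    _ = ∑' j : ℕ, ENNReal.ofReal (((2:ℝ) ^ j) ^ (-t)) *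
          ∑ k ∈ Finset.range M, (if 2 * th l j ≤ D k then 1 else 0) := by
        rw [← Summable.tsum_finsetSum (fun _ _ => ENNReal.summable)]
        simp only [Finset.mul_sum]
    _ ≤ _ := by
        refine ENNReal.tsum_le_tsum fun j => ?_
        gcongr
        have h5 := (grd_count (th_pos hl j) a hN M).trans (grd_stable (th_pos hl j) a K ha (N M))
        have h6 : ((∑ k ∈ Finset.range M, if 2 * th l j ≤ D k then 1 else 0 : ℕ) : ℝ≥0∞)
          ≤ ((grd (th l j) a K).2 : ℝ≥0∞) := by exact_mod_cast h5
        push_cast at h6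
        exact h6

lemma weak_type {r t : ℝ} {C : ℝ≥0} (hC : KH r t C) (ht : 1 ≤ t) {ℓ : ℤ}
    {F : ℕ → ℝ → ℝ} (hF : Haar ℓ F) (K : ℕ) (hK : ∀ n, K ≤ n → ∀ x, F n x = 0) {l : ℝ}
    (hl : 0 < l) :
    volume {x | ENNReal.ofReal l < W t (fun i => F i x)} ≤
      ENNReal.ofReal (4 * C * (4 / l) ^ r) *
        ∫⁻ x, ∑ i ∈ Finset.range K, ENNReal.ofReal (|F i x| ^ r) := by
  have hmeas : ∀ j, Measurable fun x => ENNReal.ofReal (((2:ℝ) ^ j) ^ (-t)) *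
      ((grd (th l j) (fun i => F i x) K).2 : ℝ≥0∞) := fun j =>
    measurable_of_cell (n := ℓ + K) (fun x y h => by rw [grd_congr _ _ (hF.const h)])
  calc volume {x | ENNReal.ofReal l < W t (fun i => F i x)}
      ≤ volume {x | 1 ≤ ∑' j : ℕ, ENNReal.ofReal (((2:ℝ) ^ j) ^ (-t)) *
          ((grd (th l j) (fun i => F i x) K).2 : ℝ≥0∞)} :=
        measure_mono fun x hx => path_count ht hl _ K (fun n hn => hK n hn x) hx
    _ ≤ ∫⁻ x, ∑' j : ℕ, ENNReal.ofReal (((2:ℝ) ^ j) ^ (-t)) *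
          ((grd (th l j) (fun i => F i x) K).2 : ℝ≥0∞) := by
        have := mul_meas_ge_le_lintegral (μ := volume) (f := fun x => ∑' j : ℕ, ENNReal.ofReal (((2:ℝ) ^ j) ^ (-t)) *
          ((grd (th l j) (fun i => F i x) K).2 : ℝ≥0∞)) (Measurable.tsum hmeas) 1
        rwa [one_mul] at this
    _ = ∑' j : ℕ, ENNReal.ofReal (((2:ℝ) ^ j) ^ (-t)) *
          ∫⁻ x, ((grd (th l j) (fun i => F i x) K).2 : ℝ≥0∞) := by
        rw [lintegral_tsum (fun j => (hmeas j).aemeasurable)]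
        congr 1
        funext j
        rw [lintegral_const_mul' _ _ ENNReal.ofReal_ne_top]
    _ ≤ ∑' j : ℕ, ENNReal.ofReal (((2:ℝ) ^ j) ^ (-t)) *
          ∑ i ∈ Finset.range K, ∫⁻ x, ENNReal.ofReal (4 / th l j * mm (th l j) (F i x)) := by
        refine ENNReal.tsum_le_tsum fun j => ?_
        gcongr
        exact count_integral' hF (th_pos hl j) K
    _ = ∑ i ∈ Finset.range K, ∫⁻ x, ∑' j : ℕ, ENNReal.ofReal (((2:ℝ) ^ j) ^ (-t)) *
          ENNReal.ofReal (4 / th l j * mm (th l j) (F i x)) := by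
        simp only [Finset.mul_sum]
        rw [Summable.tsum_finsetSum (fun _ _ => ENNReal.summable)]
        refine Finset.sum_congr rfl fun i _ => ?_
        rw [lintegral_tsum]
        · congr 1
          funext j
          rw [lintegral_const_mul' _ _ ENNReal.ofReal_ne_top]
        · intro j
          apply Measurable.aemeasurable
          exact measurable_of_cell (n := ℓ + i + 1) (fun x y h => by rw [(hF i).1 x y h])
    _ ≤ ∑ i ∈ Finset.range K, ∫⁻ x, ENNReal.ofReal (4 * C * (4 / l) ^ r) *
          ENNReal.ofReal (|F i x| ^ r) := by
        refine Finset.sum_le_sum fun i _ => lintegral_mono fun x => ?_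
        have h := hC (4 / l * |F i x|) (by positivity)
        have h2 : ∀ j : ℕ, ENNReal.ofReal (((2:ℝ) ^ j) ^ (-t)) *
          ENNReal.ofReal (4 / th l j * mm (th l j) (F i x)) = 4 *
            ENNReal.ofReal (((2:ℝ) ^ j) ^ (-t) * min (2 ^ j * (4 / l * |F i x|))
              ((2 ^ j * (4 / l * |F i x|)) ^ 2)) := by
          intro j
          have h4 : (4 : ℝ≥0∞) = ENNReal.ofReal 4 := by simp
          rw [h4, ← ENNReal.ofReal_mul (by positivity), ← ENNReal.ofReal_mul (by positivity)]
          congr 1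
          have h5 : 1 / th l j * mm (th l j) (F i x) = min (2 ^ j * (4 / l * |F i x|))
              ((2 ^ j * (4 / l * |F i x|)) ^ 2) := by
            unfold mm
            have h6 : 0 ≤ 1 / th l j := by have := th_pos hl j; positivity
            rw [mul_min_of_nonneg _ _ h6]
            congr 1
            · unfold th; field_simp
            · rw [← sq_abs (F i x)]
              unfold th; field_simp
          rw [← h5]
          ring
        simp only [h2]
        rw [ENNReal.tsum_mul_left]
        calc _ ≤ 4 * (C * ENNReal.ofReal ((4 / l * |F i x|) ^ r)) := by gcongr
          _ = _ := by
            rw [Real.mul_rpow (by positivity) (abs_nonneg _), ENNReal.ofReal_mul (by positivity),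
              ENNReal.ofReal_mul (by positivity), ENNReal.ofReal_mul (by positivity)]
            simp
            ring
    _ = _ := by
        rw [lintegral_finsetSum, Finset.mul_sum]
        · refine Finset.sum_congr rfl fun i _ => ?_
          rw [lintegral_const_mul' _ _ ENNReal.ofReal_ne_top]
        · intro i _
          exact measurable_of_cell (n := ℓ + i + 1) (fun x y h => by rw [(hF i).1 x y h])

lemma KH_lt {r t : ℝ} (hr1 : 1 ≤ r) (hr2 : r ≤ 2) (hrt : r < t) : ∃ C, KH r t C := by
  set q : ℝ := 2 ^ (r - t) with hq
  have hq0 : 0 < q := by positivity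
  have hq1 : q < 1 := Real.rpow_lt_one_of_one_lt_of_neg (by norm_num) (by linarith)
  have hfin : ∑' j : ℕ, ENNReal.ofReal q ^ j ≠ ∞ := by
    rw [ENNReal.tsum_geometric]
    apply ENNReal.inv_ne_top.2
    exact (tsub_pos_of_lt (ENNReal.ofReal_lt_one.2 hq1)).ne'
  refine ⟨(∑' j : ℕ, ENNReal.ofReal q ^ j).toNNReal, fun u hu => ?_⟩
  rw [ENNReal.coe_toNNReal hfin, ← ENNReal.tsum_mul_right]
  refine ENNReal.tsum_le_tsum fun j => ?_
  rw [← ENNReal.ofReal_pow hq0.le, ← ENNReal.ofReal_mul (by positivity)]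
  apply ENNReal.ofReal_le_ofReal
  set v : ℝ := 2 ^ j * u with hv
  have hv0 : 0 ≤ v := by positivity
  have hmin : min v (v ^ 2) ≤ v ^ r := by
    rcases le_total v 1 with h | h
    · refine (min_le_right _ _).trans ?_
      rcases hv0.eq_or_lt with h0 | h0
      · rw [← h0]; simp [Real.zero_rpow (by linarith : r ≠ 0)]
      · rw [← Real.rpow_natCast]
        exact Real.rpow_le_rpow_of_exponent_ge h0 h (by simpa using hr2)
    · refine (min_le_left _ _).trans ?_
      conv_lhs => rw [← Real.rpow_one v]
      exact Real.rpow_le_rpow_of_exponent_le h hr1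
  calc ((2:ℝ) ^ j) ^ (-t) * min v (v ^ 2) ≤ ((2:ℝ) ^ j) ^ (-t) * v ^ r := by gcongr
    _ = q ^ j * u ^ r := by
      rw [hv, Real.mul_rpow (by positivity) hu, ← mul_assoc, ← Real.rpow_add (by positivity),
        hq, ← Real.rpow_natCast, ← Real.rpow_natCast, ← Real.rpow_mul (by norm_num),
        ← Real.rpow_mul (by norm_num)]
      ring_nf

lemma KH_eq {r : ℝ} (hr1 : 1 < r) (hr2 : r < 2) : ∃ C, KH r r C := by
  set q1 : ℝ := 2 ^ (1 - r) with hq1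
  set q2 : ℝ := 2 ^ (r - 2) with hq2
  have hfin : ∀ q : ℝ, q < 1 → ∑' j : ℕ, ENNReal.ofReal q ^ j ≠ ∞ := by
    intro q hq
    rw [ENNReal.tsum_geometric]
    apply ENNReal.inv_ne_top.2
    exact (tsub_pos_of_lt (ENNReal.ofReal_lt_one.2 hq)).ne'
  have h1 := hfin q1 (Real.rpow_lt_one_of_one_lt_of_neg (by norm_num) (by linarith))
  have h2 := hfin q2 (Real.rpow_lt_one_of_one_lt_of_neg (by norm_num) (by linarith))
  set b : ℤ → ℝ≥0∞ := fun m => if 0 ≤ m then ENNReal.ofReal q1 ^ m.toNat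
    else ENNReal.ofReal q2 ^ (-m - 1).toNat with hb
  have hbs : ∑' m : ℤ, b m ≠ ∞ := by
    rw [tsum_of_nat_of_neg_add_one ENNReal.summable ENNReal.summable]
    have e1 : ∀ n : ℕ, b n = ENNReal.ofReal q1 ^ n := fun n => by simp [hb]
    have e2 : ∀ n : ℕ, b (-(n + 1)) = ENNReal.ofReal q2 ^ n := fun n => by
      simp only [hb]
      rw [if_neg (by omega)]
      congr 1
      omega
    simp only [e1, e2]
    exact ENNReal.add_ne_top.2 ⟨h1, h2⟩
  refine ⟨(∑' m : ℤ, b m).toNNReal, fun u hu => ?_⟩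
  rw [ENNReal.coe_toNNReal hbs]
  rcases hu.eq_or_lt with h0 | h0
  · rw [← h0]; simp
  obtain ⟨J, hJ1, hJ2⟩ := exists_mem_Ico_zpow h0 (one_lt_two)
  have hinj : Function.Injective (fun j : ℕ => (j : ℤ) + J) := fun i j h => by simpa using h
  refine le_trans ?_ (mul_le_mul_left (ENNReal.tsum_comp_le_tsum_of_injective hinj b) _)
  rw [← ENNReal.tsum_mul_right]
  refine ENNReal.tsum_le_tsum fun j => ?_
  set v : ℝ := 2 ^ j * u with hv
  have hv0 : 0 < v := by positivity
  have hvl : (2:ℝ) ^ ((j:ℤ) + J) ≤ v := by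
    rw [zpow_add₀ (by norm_num), zpow_natCast, hv]
    gcongr
  have hvu : v ≤ (2:ℝ) ^ ((j:ℤ) + J + 1) := by
    rw [add_assoc, zpow_add₀ (by norm_num), zpow_natCast, hv]
    gcongr
  have hfac : ((2:ℝ) ^ j) ^ (-r) = v ^ (-r) * u ^ r := by
    rw [hv, Real.mul_rpow (by positivity) hu, mul_assoc, ← Real.rpow_add h0]
    simp
  rw [hfac]
  have hmain : ENNReal.ofReal (v ^ (-r) * min v (v^2)) ≤ b ((j:ℤ) + J) := by
    simp only [hb]
    split_ifs with hm
    · rw [← ENNReal.ofReal_pow (by positivity)]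
      apply ENNReal.ofReal_le_ofReal
      calc v ^ (-r) * min v (v^2) ≤ v ^ (-r) * v := by gcongr; exact min_le_left _ _
        _ = v ^ (1 - r) := by
          rw [sub_eq_add_neg, add_comm, Real.rpow_add hv0, Real.rpow_one]
        _ ≤ ((2:ℝ) ^ ((j:ℤ) + J)) ^ (1 - r) :=
          Real.rpow_le_rpow_of_nonpos (by positivity) hvl (by linarith)
        _ = _ := by
          obtain ⟨n, hn⟩ := Int.eq_ofNat_of_zero_le hm
          rw [hn, Int.toNat_natCast, hq1, zpow_natCast, ← Real.rpow_natCast, ← Real.rpow_natCast,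
            ← Real.rpow_mul (by norm_num), ← Real.rpow_mul (by norm_num), mul_comm]
    · rw [← ENNReal.ofReal_pow (by positivity)]
      apply ENNReal.ofReal_le_ofReal
      calc v ^ (-r) * min v (v^2) ≤ v ^ (-r) * v^2 := by gcongr; exact min_le_right _ _
        _ = v ^ (2 - r) := by
          rw [sub_eq_add_neg, add_comm, Real.rpow_add hv0, Real.rpow_two]
        _ ≤ ((2:ℝ) ^ ((j:ℤ) + J + 1)) ^ (2 - r) :=
          Real.rpow_le_rpow (by positivity) hvu (by linarith)
        _ = _ := by
          obtain ⟨n, hn⟩ := Int.eq_ofNat_of_zero_le (show 0 ≤ -((j:ℤ) + J) - 1 by omega)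
          rw [hn, Int.toNat_natCast, hq2, show (j:ℤ) + J + 1 = -(n:ℤ) by omega,
            zpow_neg, zpow_natCast, ← Real.rpow_natCast,
            ← Real.rpow_neg (by norm_num), ← Real.rpow_natCast,
            ← Real.rpow_mul (by norm_num), ← Real.rpow_mul (by norm_num)]
          ring_nf
  calc ENNReal.ofReal (v ^ (-r) * u ^ r * min v (v^2))
      = ENNReal.ofReal (v ^ (-r) * min v (v^2)) * ENNReal.ofReal (u ^ r) := by
        rw [← ENNReal.ofReal_mul (by positivity)]
        ring_nf
    _ ≤ _ := by gcongr

/-- the power sum -/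
def SS (r : ℝ) (a : ℕ → ℝ) (K : ℕ) : ℝ := ∑ i ∈ Finset.range K, |a i| ^ r

lemma SS_nonneg (r : ℝ) (a : ℕ → ℝ) (K : ℕ) : 0 ≤ SS r a K :=
  Finset.sum_nonneg fun _ _ => by positivity

lemma SS_mono (r : ℝ) (a : ℕ → ℝ) {n m : ℕ} (h : n ≤ m) : SS r a n ≤ SS r a m :=
  Finset.sum_le_sum_of_subset_of_nonneg (by simpa using h) (fun _ _ _ => by positivity)

open Classical in
/-- restarted and stopped family -/
def stp (r t l c : ℝ) (F : ℕ → ℝ → ℝ) : ℕ → ℝ → ℝ := fun n x =>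
  if ENNReal.ofReal l < W t (trunc n (fun i => F i x)) ∧ SS r (fun i => F i x) (n + 1) ≤ c
  then F n x else 0

lemma stp_haar {r t l c : ℝ} {ℓ : ℤ} {F : ℕ → ℝ → ℝ} (hF : Haar ℓ F) :
    Haar ℓ (stp r t l c F) := by
  intro n
  have hQ : ∀ x y, cell (ℓ + n) x = cell (ℓ + n) y →
      trunc n (fun i => F i x) = trunc n (fun i => F i y) ∧
      SS r (fun i => F i x) (n + 1) = SS r (fun i => F i y) (n + 1) := by
    intro x y h
    have h1 := hF.const h
    constructor
    · funext i
      unfold trunc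
      split_ifs with hi
      · exact h1 i hi
      · rfl
    · unfold SS
      refine Finset.sum_congr rfl fun i hi => ?_
      rw [Finset.mem_range] at hi
      rcases Nat.lt_succ_iff_lt_or_eq.1 hi with h2 | h2
      · simp only [h1 i h2]
      · subst h2
        simp only [(hF i).abs h]
  constructor
  · intro x y h
    have h' : cell (ℓ + n) x = cell (ℓ + n) y := by rw [cell_succ _ x, cell_succ _ y, h]
    simp only [stp, (hQ x y h').1, (hQ x y h').2, (hF n).1 x y h]
  · intro x y h
    have h' : cell (ℓ + n) x = cell (ℓ + n) y := by
      rw [cell_succ _ x, cell_succ _ y, h, sib_div]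
    simp only [stp, (hQ x y h').1, (hQ x y h').2, (hF n).2 x y h]
    split_ifs <;> simp

lemma stp_sum (r t l c : ℝ) (hr : 0 < r) (hc : 0 ≤ c) (F : ℕ → ℝ → ℝ) (K : ℕ) (x : ℝ) :
    SS r (fun i => stp r t l c F i x) K ≤ c ∧
    SS r (fun i => stp r t l c F i x) K ≤ SS r (fun i => F i x) K := by
  induction K with
  | zero => simpa [SS] using hc
  | succ K ih =>
    have e : ∀ a : ℕ → ℝ, SS r a (K + 1) = SS r a K + |a K| ^ r := fun a =>
      Finset.sum_range_succ _ _
    by_cases h : ENNReal.ofReal l < W t (trunc K (fun i => F i x)) ∧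
        SS r (fun i => F i x) (K + 1) ≤ c
    · have h1 : stp r t l c F K x = F K x := by simp only [stp]; rw [if_pos h]
      have h2 : SS r (fun i => stp r t l c F i x) (K + 1) ≤ SS r (fun i => F i x) (K + 1) := by
        rw [e, e, h1]
        linarith [ih.2]
      exact ⟨h2.trans h.2, h2⟩
    · have h1 : stp r t l c F K x = 0 := by simp only [stp]; rw [if_neg h]
      have h2 : SS r (fun i => stp r t l c F i x) (K + 1)
          = SS r (fun i => stp r t l c F i x) K := by
        rw [e, h1, abs_zero, Real.zero_rpow hr.ne', add_zero]
      rw [h2]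
      exact ⟨ih.1, ih.2.trans (SS_mono _ _ (Nat.le_succ K))⟩

lemma abs_le_SS {r : ℝ} (hr : 0 < r) (a : ℕ → ℝ) {K i : ℕ} (hi : i < K) :
    |a i| ≤ SS r a K ^ (1 / r) := by
  have h : |a i| ^ r ≤ SS r a K :=
    Finset.single_le_sum (f := fun i => |a i| ^ r) (fun _ _ => by positivity) (Finset.mem_range.2 hi)
  calc |a i| = (|a i| ^ r) ^ (1 / r) := by
        rw [← Real.rpow_mul (abs_nonneg _), mul_one_div_cancel hr.ne', Real.rpow_one]
    _ ≤ _ := Real.rpow_le_rpow (by positivity) h (by positivity)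

lemma W_meas {t : ℝ} {ℓ : ℤ} {F : ℕ → ℝ → ℝ} (hF : Haar ℓ F) (K : ℕ)
    (hK : ∀ n, K ≤ n → ∀ x, F n x = 0) : Measurable (fun x => W t (fun i => F i x)) := by
  apply measurable_of_cell (n := ℓ + K)
  intro x y h
  congr 1
  funext i
  rcases lt_or_ge i K with hi | hi
  · exact hF.const h i hi
  · rw [hK i hi, hK i hi]

lemma SS_meas {r : ℝ} {ℓ : ℤ} {F : ℕ → ℝ → ℝ} (hF : Haar ℓ F) (K : ℕ) :
    Measurable (fun x => SS r (fun i => F i x) K) := by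
  apply measurable_of_cell (n := ℓ + K)
  intro x y h
  unfold SS
  refine Finset.sum_congr rfl fun i hi => ?_
  simp only [hF.const h i (Finset.mem_range.1 hi)]

lemma good_lambda {r t : ℝ} {C : ℝ≥0} (hC : KH r t C) (hr : 1 ≤ r) (ht : 1 ≤ t) {ℓ : ℤ}
    {F : ℕ → ℝ → ℝ} (hF : Haar ℓ F) (K : ℕ) (hK : ∀ n, K ≤ n → ∀ x, F n x = 0) {l γ : ℝ}
    (hl : 0 < l) (hγ : 0 < γ) (hγ1 : γ ≤ 1) :
    volume {x | 3 * ENNReal.ofReal l < W t (fun i => F i x)} ≤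
      volume {x | γ * l < SS r (fun i => F i x) K ^ (1 / r)} +
      ENNReal.ofReal (4 * C * (4 * γ) ^ r) *
        volume {x | ENNReal.ofReal l < W t (fun i => F i x)} := by
  have hr0 : 0 < r := by linarith
  set g := stp r t l ((γ * l) ^ r) F with hg
  have hgz : ∀ n, K ≤ n → ∀ x, g n x = 0 := by
    intro n hn x
    simp only [hg, stp, hK n hn x, ite_self]
  have hw := weak_type hC ht (stp_haar (r := r) (t := t) (l := l) (c := (γ * l) ^ r) hF) K hgz hl
  have hsub : {x | 3 * ENNReal.ofReal l < W t (fun i => F i x)} ⊆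
      {x | γ * l < SS r (fun i => F i x) K ^ (1 / r)} ∪
      {x | ENNReal.ofReal l < W t (fun i => g i x)} := by
    intro x hx
    by_cases hS : γ * l < SS r (fun i => F i x) K ^ (1 / r)
    · exact Or.inl hS
    · right
      rw [not_lt] at hS
      have hgl : 0 < γ * l := by positivity
      have hSS : SS r (fun i => F i x) K ≤ (γ * l) ^ r := by
        calc SS r (fun i => F i x) K = (SS r (fun i => F i x) K ^ (1 / r)) ^ r := by
              rw [← Real.rpow_mul (SS_nonneg _ _ _), one_div_mul_cancel hr0.ne', Real.rpow_one]
          _ ≤ _ := Real.rpow_le_rpow (Real.rpow_nonneg (SS_nonneg _ _ _) _) hS hr0.le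
      refine good_path ht (fun i => F i x) (fun i => g i x) K (fun n hn => hK n hn x) _ hx ?_ ?_
      · intro n
        apply ENNReal.ofReal_le_ofReal
        rcases lt_or_ge n K with hn | hn
        · refine (abs_le_SS hr0 (fun i => F i x) hn).trans (hS.trans ?_)
          nlinarith
        · simp only [hK n hn x, abs_zero]
          exact hl.le
      · intro n
        rcases lt_or_ge n K with hn | hn
        · have h1 : SS r (fun i => F i x) (n + 1) ≤ (γ * l) ^ r := (SS_mono _ _ hn).trans hSS
          simp only [hg, stp, h1, and_true]
        · simp only [hgz n hn, hK n hn, ite_self]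
  refine (measure_mono hsub).trans ((measure_union_le _ _).trans (add_le_add le_rfl ?_))
  refine hw.trans ?_
  have hmeasW : MeasurableSet {x | ENNReal.ofReal l < W t (fun i => F i x)} :=
    measurableSet_lt measurable_const (W_meas hF K hK)
  have hIntg : ∫⁻ x, ∑ i ∈ Finset.range K, ENNReal.ofReal (|g i x| ^ r) ≤
      ENNReal.ofReal ((γ * l) ^ r) * volume {x | ENNReal.ofReal l < W t (fun i => F i x)} := by
    rw [← lintegral_indicator_const hmeasW]
    refine lintegral_mono fun x => ?_
    by_cases hx : ENNReal.ofReal l < W t (fun i => F i x)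
    · rw [Set.indicator_of_mem (by exact hx), ← ENNReal.ofReal_sum_of_nonneg (fun _ _ => by positivity)]
      exact ENNReal.ofReal_le_ofReal (stp_sum r t l ((γ * l) ^ r) hr0 (by positivity) F K x).1
    · rw [Set.indicator_of_notMem (by exact hx)]
      apply le_of_eq
      apply Finset.sum_eq_zero
      intro i _
      have : g i x = 0 := by
        simp only [hg, stp]
        rw [if_neg]
        rintro ⟨h1, _⟩
        exact hx (h1.trans_le (W_trunc_le _ _ _))
      rw [this, abs_zero, Real.zero_rpow hr0.ne', ENNReal.ofReal_zero]
  refine (mul_le_mul_right hIntg _).trans (le_of_eq ?_)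
  rw [← mul_assoc, ← ENNReal.ofReal_mul (by positivity)]
  congr 2
  rw [mul_assoc, ← Real.mul_rpow (by positivity) (by positivity)]
  congr 2
  field_simp

/-- the strong estimate for finite families -/
def MF (p r t : ℝ) (D : ℝ≥0) : Prop := ∀ (ℓ : ℤ) (F : ℕ → ℝ → ℝ) (K : ℕ), Haar ℓ F →
  (∀ n, K ≤ n → ∀ x, F n x = 0) →
  ∫⁻ x, (W t (fun i => F i x)) ^ p ≤
    D * ∫⁻ x, ((∑ i ∈ Finset.range K, ENNReal.ofReal |F i x| ^ r) ^ (1 / r)) ^ p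

lemma main_finite {p r t : ℝ} (hp : 0 < p) {C : ℝ≥0} (hC : KH r t C) (hr : 1 ≤ r) (ht : 1 ≤ t) :
    ∃ D : ℝ≥0, 0 < D ∧ MF p r t D := by
  have hr0 : 0 < r := by linarith
  set ε : ℝ := 3⁻¹ ^ p / 2 with hε
  have hε0 : 0 < ε := by positivity
  set γ : ℝ := min (1/4) (ε / (16 * C + 1)) with hγd
  have hγ : 0 < γ := lt_min (by norm_num) (by positivity)
  have hγ4 : γ ≤ 1/4 := min_le_left _ _
  have hγe : 4 * C * (4 * γ) ^ r ≤ ε := by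
    have h1 : (4 * γ) ^ r ≤ 4 * γ := by
      conv_rhs => rw [← Real.rpow_one (4 * γ)]
      exact Real.rpow_le_rpow_of_exponent_ge (by positivity) (by linarith) hr
    have h2 : γ * (16 * C + 1) ≤ ε := by
      rw [← le_div_iff₀ (by positivity)]
      exact min_le_right _ _
    have h3 : 4 * C * (4 * γ) ^ r ≤ 4 * C * (4 * γ) := by gcongr
    nlinarith
  refine ⟨Real.toNNReal (γ⁻¹ ^ p / ε), Real.toNNReal_pos.2 (div_pos (Real.rpow_pos_of_pos (inv_pos.2 hγ) _) hε0), ?_⟩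
  intro ℓ F K hF hK
  set w : ℝ → ℝ := fun x => (W t (fun i => F i x)).toReal with hw
  set S : ℝ → ℝ := fun x => SS r (fun i => F i x) K ^ (1 / r) with hS
  have hS0 : ∀ x, 0 ≤ S x := fun x => Real.rpow_nonneg (SS_nonneg _ _ _) _
  have hw0 : ∀ x, 0 ≤ w x := fun x => ENNReal.toReal_nonneg
  have hWle : ∀ x, W t (fun i => F i x) ≤ ENNReal.ofReal (K * S x) := by
    intro x
    refine (W_le_sum ht _ K (fun n hn => hK n hn x)).trans ?_
    rw [← ENNReal.ofReal_sum_of_nonneg (fun _ _ => abs_nonneg _)]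
    apply ENNReal.ofReal_le_ofReal
    calc ∑ i ∈ Finset.range K, |F i x| ≤ ∑ i ∈ Finset.range K, S x :=
          Finset.sum_le_sum fun i hi => abs_le_SS hr0 (fun i => F i x) (Finset.mem_range.1 hi)
      _ = K * S x := by simp
  have hWtop : ∀ x, W t (fun i => F i x) ≠ ∞ := fun x =>
    ne_top_of_le_ne_top ENNReal.ofReal_ne_top (hWle x)
  have hwle : ∀ x, w x ≤ K * S x := fun x =>
    ENNReal.toReal_le_of_le_ofReal (mul_nonneg (Nat.cast_nonneg _) (hS0 x)) (hWle x)
  have hwm : Measurable w := (W_meas hF K hK).ennreal_toReal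
  have hSm : Measurable S := (SS_meas hF K).pow_const _
  have eX : ∀ x, (W t (fun i => F i x)) ^ p = ENNReal.ofReal (w x ^ p) := by
    intro x
    rw [← ENNReal.ofReal_rpow_of_nonneg (hw0 x) hp.le, ENNReal.ofReal_toReal (hWtop x)]
  have eY : ∀ x, ((∑ i ∈ Finset.range K, ENNReal.ofReal |F i x| ^ r) ^ (1 / r)) ^ p
      = ENNReal.ofReal (S x ^ p) := by
    intro x
    rw [← ENNReal.ofReal_rpow_of_nonneg (hS0 x) hp.le]
    simp only [hS]
    rw [← ENNReal.ofReal_rpow_of_nonneg (SS_nonneg r (fun i => F i x) K) (by positivity)]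
    simp only [SS]
    rw [ENNReal.ofReal_sum_of_nonneg (fun _ _ => by positivity)]
    simp only [ENNReal.ofReal_rpow_of_nonneg (abs_nonneg _) hr0.le]
  simp only [eX, eY]
  set X := ∫⁻ x, ENNReal.ofReal (w x ^ p) with hX
  set Y := ∫⁻ x, ENNReal.ofReal (S x ^ p) with hY
  by_cases hYt : Y = ∞
  · rw [hYt, ENNReal.mul_top]
    · exact le_top
    · exact ENNReal.coe_ne_zero.2 (Real.toNNReal_pos.2 (div_pos (Real.rpow_pos_of_pos (inv_pos.2 hγ) _) hε0)).ne'
  have hXt : X ≠ ∞ := by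
    have h1 : X ≤ ENNReal.ofReal ((K : ℝ) ^ p) * Y := by
      rw [hY, ← lintegral_const_mul' _ _ ENNReal.ofReal_ne_top]
      refine lintegral_mono fun x => ?_
      rw [← ENNReal.ofReal_mul (by positivity), ← Real.mul_rpow (by positivity) (hS0 x)]
      exact ENNReal.ofReal_le_ofReal (Real.rpow_le_rpow (hw0 x) (hwle x) hp.le)
    exact ne_top_of_le_ne_top (ENNReal.mul_ne_top ENNReal.ofReal_ne_top hYt) h1
  -- layer cake
  have scale : ∀ (c : ℝ) (_ : 0 ≤ c) (h : ℝ → ℝ) (_ : ∀ x, 0 ≤ h x),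
      ∫⁻ x, ENNReal.ofReal ((c * h x) ^ p) = ENNReal.ofReal (c ^ p) * ∫⁻ x, ENNReal.ofReal (h x ^ p) := by
    intro c hc h hh
    rw [← lintegral_const_mul' _ _ ENNReal.ofReal_ne_top]
    congr 1
    funext x
    rw [← ENNReal.ofReal_mul (by positivity), Real.mul_rpow hc (hh x)]
  have L1 := lintegral_rpow_eq_lintegral_meas_lt_mul volume (f := fun x => 3⁻¹ * w x)
    (Filter.Eventually.of_forall fun x => by have := hw0 x; positivity)
    (hwm.const_mul _).aemeasurable hp
  have L2 := lintegral_rpow_eq_lintegral_meas_lt_mul volume (f := fun x => γ⁻¹ * S x)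
    (Filter.Eventually.of_forall fun x => by have := hS0 x; positivity)
    (hSm.const_mul _).aemeasurable hp
  have L3 := lintegral_rpow_eq_lintegral_meas_lt_mul volume (f := w)
    (Filter.Eventually.of_forall hw0) hwm.aemeasurable hp
  rw [scale _ (by positivity) _ hw0] at L1
  rw [scale _ (by positivity) _ hS0] at L2
  have hmeasY : Measurable fun l : ℝ => volume {x | l < γ⁻¹ * S x} * ENNReal.ofReal (l ^ (p - 1)) := by
    apply Measurable.mul
    · apply Antitone.measurable
      intro a b hab
      exact measure_mono fun x hx => lt_of_le_of_lt hab hx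
    · fun_prop
  have key : ENNReal.ofReal (3⁻¹ ^ p) * X ≤ ENNReal.ofReal (γ⁻¹ ^ p) * Y + ENNReal.ofReal ε * X := by
    rw [L1, L2]
    conv_rhs => rw [hX, L3]
    rw [mul_left_comm (ENNReal.ofReal ε), ← mul_add]
    gcongr
    rw [← lintegral_const_mul' _ _ ENNReal.ofReal_ne_top, ← lintegral_add_left hmeasY]
    refine setLIntegral_mono' measurableSet_Ioi fun l hl => ?_
    have hl : 0 < l := hl
    rw [← mul_assoc, ← add_mul]
    gcongr
    have h := good_lambda hC hr ht hF K hK hl hγ (by linarith)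
    have s1 : {x | l < 3⁻¹ * w x} = {x | 3 * ENNReal.ofReal l < W t (fun i => F i x)} := by
      ext x
      simp only [Set.mem_ofPred_eq, hw]
      rw [show (3:ℝ≥0∞) = ENNReal.ofReal 3 by simp, ← ENNReal.ofReal_mul (by norm_num),
        ENNReal.ofReal_lt_iff_lt_toReal (by positivity) (hWtop x), inv_mul_eq_div,
        lt_div_iff₀ (by norm_num), mul_comm]
    have s2 : {x | l < γ⁻¹ * S x} = {x | γ * l < SS r (fun i => F i x) K ^ (1 / r)} := by
      ext x
      simp only [Set.mem_ofPred_eq, hS]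
      rw [inv_mul_eq_div, lt_div_iff₀ hγ, mul_comm]
    have s3 : {x | l < w x} = {x | ENNReal.ofReal l < W t (fun i => F i x)} := by
      ext x
      simp only [Set.mem_ofPred_eq, hw]
      rw [ENNReal.ofReal_lt_iff_lt_toReal hl.le (hWtop x)]
    rw [s1, s2, s3]
    refine h.trans ?_
    gcongr
  have h3 : ENNReal.ofReal (3⁻¹ ^ p) * X = ENNReal.ofReal ε * X + ENNReal.ofReal ε * X := by
    rw [← add_mul, ← ENNReal.ofReal_add hε0.le hε0.le, hε, add_halves]
  rw [h3] at key
  have key2 : ENNReal.ofReal ε * X ≤ ENNReal.ofReal (γ⁻¹ ^ p) * Y :=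
    (ENNReal.add_le_add_iff_right (ENNReal.mul_ne_top ENNReal.ofReal_ne_top hXt)).1 key
  have hD : ((Real.toNNReal (γ⁻¹ ^ p / ε) : ℝ≥0) : ℝ≥0∞) = ENNReal.ofReal (γ⁻¹ ^ p / ε) := rfl
  rw [hD, ENNReal.ofReal_div_of_pos hε0, div_eq_mul_inv, mul_right_comm, ← div_eq_mul_inv,
    ENNReal.le_div_iff_mul_le (Or.inl (by simpa using hε0)) (Or.inl ENNReal.ofReal_ne_top), mul_comm]
  exact key2

lemma main_one {p : ℝ} (hp : 0 < p) : MF p 1 1 1 := by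
  intro ℓ F K hF hK
  rw [ENNReal.coe_one, one_mul]
  refine lintegral_mono fun x => ?_
  apply ENNReal.rpow_le_rpow _ hp.le
  simpa using W_le_sum le_rfl (fun i => F i x) K (fun n hn => hK n hn x)

/-- the finite section of a family -/
def sect (f : ℤ → ℝ → ℝ) (L : ℕ) : ℕ → ℝ → ℝ := fun n x =>
  if n < 2 * L then f (-(L:ℤ) + n + 1) x else 0

lemma sect_haar {f : ℤ → ℝ → ℝ} (hf : IsDiscLPFamily f) (L : ℕ) : Haar (-(L:ℤ)) (sect f L) := by
  intro n
  unfold sect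
  by_cases h : n < 2 * L
  · simp only [h, if_true]
    exact layer_of_LP hf _
  · simp only [h, if_false]
    exact ⟨fun _ _ _ => rfl, fun _ _ _ => by simp⟩

lemma sect_sum (f : ℤ → ℝ → ℝ) (L : ℕ) (x : ℝ) {a b : ℤ} (hab : a ≤ b) (ha : -(L:ℤ) ≤ a)
    (hb : b ≤ L) :
    PS (fun i => sect f L i x) (b + L).toNat - PS (fun i => sect f L i x) (a + L).toNat
      = ∑ i ∈ Finset.Ioc a b, f i x := by
  rw [PS_sub (by omega)]
  refine Finset.sum_bij (fun n _ => -(L:ℤ) + n + 1) ?_ ?_ ?_ ?_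
  · intro n hn
    simp only [Finset.mem_Ico, Finset.mem_Ioc] at hn ⊢
    omega
  · intro n _ m _ h
    omega
  · intro i hi
    simp only [Finset.mem_Ioc] at hi
    refine ⟨(i + L - 1).toNat, ?_, ?_⟩
    · simp only [Finset.mem_Ico]; omega
    · omega
  · intro n hn
    simp only [Finset.mem_Ico] at hn
    simp only [sect]
    rw [if_pos (by omega)]

lemma sect_W {t : ℝ} (f : ℤ → ℝ → ℝ) (Nk : ℕ → ℤ) (hN : ∀ k, Nk k ≤ Nk (k + 1)) (x : ℝ)
    (M L : ℕ) (hL : ∀ k ≤ M, -(L:ℤ) ≤ Nk k ∧ Nk k ≤ L) :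
    (∑ k ∈ Finset.range M, ENNReal.ofReal |∑ i ∈ Finset.Ioc (Nk k) (Nk (k+1)), f i x| ^ t) ^ (1 / t)
      ≤ W t (fun i => sect f L i x) := by
  have hm : Monotone Nk := monotone_nat_of_le_succ hN
  refine le_trans (le_of_eq ?_) (le_W (N := fun k => (Nk k + L).toNat)
    (fun i j h => by have := hm h; simp only; omega) M)
  congr 1
  refine Finset.sum_congr rfl fun k hk => ?_
  rw [Finset.mem_range] at hk
  rw [sect_sum f L x (hN k) (hL k (by omega)).1 (hL (k+1) (by omega)).2]

lemma transfer {p r t : ℝ} (hp : 0 < p) (hr : 0 < r) (ht : 0 < t) {D : ℝ≥0} (hD : MF p r t D)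
    (f : ℤ → ℝ → ℝ) (hf : IsDiscLPFamily f) (Nk : ℕ → ℝ → ℤ) (hN : IsJumpCollection Nk) :
    ∫⁻ x : ℝ, ((∑' k : ℕ, (ENNReal.ofReal
              |∑ i ∈ Finset.Ioc (Nk k x) (Nk (k + 1) x), f i x|) ^ t) ^ (1 / t)) ^ p
    ≤ D * ∫⁻ x : ℝ, ((∑' i : ℤ, (ENNReal.ofReal |f i x|) ^ r) ^ (1 / r)) ^ p := by
  have hz : ∀ L : ℕ, ∀ n, 2 * L ≤ n → ∀ x, sect f L n x = 0 := fun L n hn x => by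
    simp only [sect]
    rw [if_neg (by omega)]
  calc _ ≤ ∫⁻ x, Filter.liminf (fun L : ℕ => (W t (fun i => sect f L i x)) ^ p) Filter.atTop := by
        refine lintegral_mono fun x => ?_
        have htend : Filter.Tendsto (fun M : ℕ => ((∑ k ∈ Finset.range M, (ENNReal.ofReal
              |∑ i ∈ Finset.Ioc (Nk k x) (Nk (k + 1) x), f i x|) ^ t) ^ (1 / t)) ^ p) Filter.atTop
            (nhds (((∑' k : ℕ, (ENNReal.ofReal
              |∑ i ∈ Finset.Ioc (Nk k x) (Nk (k + 1) x), f i x|) ^ t) ^ (1 / t)) ^ p)) :=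
          ((ENNReal.continuous_rpow_const.comp ENNReal.continuous_rpow_const).tendsto _).comp
            (ENNReal.tendsto_nat_tsum _)
        refine le_of_tendsto' htend fun M => ?_
        refine Filter.le_liminf_of_le (by isBoundedDefault) ?_
        rw [Filter.eventually_atTop]
        refine ⟨∑ k ∈ Finset.range (M + 1), (Nk k x).natAbs, fun L hL => ?_⟩
        apply ENNReal.rpow_le_rpow _ hp.le
        refine sect_W f (fun k => Nk k x) (fun k => hN.2 k x) x M L ?_
        intro k hk
        have := Finset.single_le_sum (f := fun k => (Nk k x).natAbs) (fun _ _ => Nat.zero_le _)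
          (Finset.mem_range.2 (Nat.lt_succ_of_le hk))
        have h2 : (Nk k x).natAbs ≤ L := le_trans this hL
        show -(L:ℤ) ≤ Nk k x ∧ Nk k x ≤ L
        omega
    _ ≤ Filter.liminf (fun L : ℕ => ∫⁻ x, (W t (fun i => sect f L i x)) ^ p) Filter.atTop :=
        lintegral_liminf_le fun L => (W_meas (sect_haar hf L) (2 * L) (hz L)).pow_const p
    _ ≤ _ := by
        refine Filter.liminf_le_of_le (by isBoundedDefault) fun b hb => ?_
        obtain ⟨L, hL⟩ := hb.exists
        refine hL.trans ((hD _ _ _ (sect_haar hf L) (hz L)).trans ?_)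
        gcongr with x
        have h1 : ∑ i ∈ Finset.range (2 * L), ENNReal.ofReal |sect f L i x| ^ r
            = ∑ i ∈ Finset.range (2 * L), ENNReal.ofReal |f (-(L:ℤ) + i + 1) x| ^ r := by
          refine Finset.sum_congr rfl fun i hi => ?_
          simp only [sect]
          rw [if_pos (Finset.mem_range.1 hi)]
        rw [h1]
        refine (ENNReal.sum_le_tsum (f := fun i : ℕ =>
          ENNReal.ofReal |f (-(L:ℤ) + i + 1) x| ^ r) _).trans ?_
        exact ENNReal.tsum_comp_le_tsum_of_injective
          (f := fun i : ℕ => -(L:ℤ) + i + 1) (fun i j h => by simpa using h)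
          (fun i => ENNReal.ofReal |f i x| ^ r)

lemma exists_MF {p r t : ℝ} (hp : 1 < p) (hr1 : 1 ≤ r) (hr2 : r ≤ 2)
    (hrt : r ≤ t) (hcase : r < 2 ∨ r < t) : ∃ D : ℝ≥0, 0 < D ∧ MF p r t D := by
  rcases hrt.lt_or_eq with h | h
  · obtain ⟨C, hC⟩ := KH_lt hr1 hr2 h
    exact main_finite (by linarith) hC hr1 (by linarith)
  · subst h
    rcases hr1.lt_or_eq with h1 | h1
    · obtain ⟨C, hC⟩ := KH_eq h1 (by rcases hcase with h | h; exact h; exact absurd h (lt_irrefl _))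
      exact main_finite (by linarith) hC hr1 hr1
    · subst h1
      exact ⟨1, one_pos, main_one (by linarith)⟩

end LPX

/-- Lépingle's inequality (`t > r`) and Pisier–Xu's inequality (`t = r < 2`),
discrete case. -/
theorem discrete_lepingle_pisier_xu
    (p r t : ℝ) (hp : 1 < p) (hr1 : 1 ≤ r) (hr2 : r ≤ 2)
    (hrt : r ≤ t) (hcase : r < 2 ∨ r < t) :
    ∃ C : ℝ≥0, 0 < C ∧
      ∀ (f : ℤ → ℝ → ℝ), IsDiscLPFamily f →
      ∀ (Nk : ℕ → ℝ → ℤ), IsJumpCollection Nk →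
      (∫⁻ x : ℝ,
          ((∑' k : ℕ, (ENNReal.ofReal
              |∑ i ∈ Finset.Ioc (Nk k x) (Nk (k + 1) x), f i x|) ^ t) ^ (1 / t)) ^ p) ^ (1 / p)
        ≤ (C : ℝ≥0∞) *
      (∫⁻ x : ℝ,
          ((∑' i : ℤ, (ENNReal.ofReal |f i x|) ^ r) ^ (1 / r)) ^ p) ^ (1 / p) := by
  have hp0 : 0 < p := by linarith
  obtain ⟨D, hD0, hD⟩ := LPX.exists_MF hp hr1 hr2 hrt hcase
  refine ⟨D ^ (1 / p), NNReal.rpow_pos hD0, fun f hf Nk hN => ?_⟩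
  have h := LPX.transfer hp0 (by linarith) (by linarith) hD f hf Nk hN
  refine (ENNReal.rpow_le_rpow h (by positivity)).trans (le_of_eq ?_)
  rw [ENNReal.mul_rpow_of_nonneg _ _ (by positivity), ENNReal.coe_rpow_of_nonneg _ (by positivity)]

end
end

section
/- Let 1 < p < ∞. There exists a constant C such that for every discrete Littlewood–Paley family (f_i)_{i∈ℤ}, every jump collection (N_k)_{k≥0}, and every λ > 0, one has ‖ λ · (#{k ≥ 1 : |Σ_{N_{k−1}(x) < i ≤ N_k(x)} f_i(x)| > λ})^{1/2} ‖_{L^p(dx)} ≤ C ‖ (Σ_{i∈ℤ} |f_i|^2)^{1/2} ‖_{L^p(ℝ)}. (This is the weak-type endpoint used by Bourgain to prove Lépingle's inequality.) -/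
open MeasureTheory ENNReal
open scoped NNReal

noncomputable section

theorem poly_aux (k : ℕ) : ∃ a b : ℝ, 0 ≤ a ∧ 0 ≤ b ∧ ∀ X y e : ℝ, 0 ≤ X → |y| ≤ X → 0 ≤ e →
    y ^ 2 ≤ 4 * e * X →
    (X + y) ^ (k + 1) + (X - y) ^ (k + 1) ≤ 2 * X ^ (k + 1) + a * e * X ^ k ∧
    y * ((X + y) ^ (k + 1) - (X - y) ^ (k + 1)) ≤ b * e * X ^ (k + 1) := by
  induction k with
  | zero =>
    refine ⟨0, 8, le_rfl, by norm_num, fun X y e hX hy he h => ⟨?_, ?_⟩⟩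
    · simp; linarith
    · simp; nlinarith
  | succ k ih =>
    obtain ⟨a, b, ha, hb, ih⟩ := ih
    refine ⟨a + b, b + 4 * (2 + 2) * 2 ^ (k + 1), by positivity, by positivity,
      fun X y e hX hy he h => ?_⟩
    obtain ⟨h1, h2⟩ := ih X y e hX hy he h
    have hy' := abs_le.1 hy
    have e1 : (X + y) ^ (k + 1) ≤ 2 ^ (k + 1) * X ^ (k + 1) := by
      rw [← mul_pow]; apply pow_le_pow_left₀ <;> linarith
    have e2 : (X - y) ^ (k + 1) ≤ 2 ^ (k + 1) * X ^ (k + 1) := by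
      rw [← mul_pow]; apply pow_le_pow_left₀ <;> linarith
    constructor
    · have : (X + y) ^ (k + 1 + 1) + (X - y) ^ (k + 1 + 1) =
        X * ((X + y) ^ (k + 1) + (X - y) ^ (k + 1)) +
          y * ((X + y) ^ (k + 1) - (X - y) ^ (k + 1)) := by ring
      rw [this]
      have := mul_le_mul_of_nonneg_left h1 hX
      have r : X * (2 * X ^ (k + 1) + a * e * X ^ k) = 2 * X ^ (k + 1 + 1) + a * e * X ^ (k + 1) := by
        ring
      nlinarith
    · have : y * ((X + y) ^ (k + 1 + 1) - (X - y) ^ (k + 1 + 1)) =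
        X * (y * ((X + y) ^ (k + 1) - (X - y) ^ (k + 1))) +
          y ^ 2 * ((X + y) ^ (k + 1) + (X - y) ^ (k + 1)) := by ring
      rw [this]
      have t1 := mul_le_mul_of_nonneg_left h2 hX
      have t2 : y ^ 2 * ((X + y) ^ (k + 1) + (X - y) ^ (k + 1)) ≤
          (4 * e * X) * (4 * (2 ^ (k + 1) * X ^ (k + 1))) := by
        have : 0 ≤ 2 ^ (k + 1) * X ^ (k + 1) := by positivity
        have p1 : 0 ≤ (X + y) ^ (k + 1) := pow_nonneg (by linarith) _
        have p2 : 0 ≤ (X - y) ^ (k + 1) := pow_nonneg (by linarith) _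
        apply mul_le_mul h (by linarith) (by linarith) (by positivity)
      calc _ ≤ X * (b * e * X ^ (k + 1)) + (4 * e * X) * (4 * (2 ^ (k + 1) * X ^ (k + 1))) :=
            add_le_add t1 t2
        _ = _ := by ring

theorem pow_aux (k : ℕ) (G e : ℝ) (hG : 0 ≤ G) (he : 0 ≤ e) :
    (G + e) ^ (k + 1) ≤ G ^ (k + 1) + (k + 1) * e * (G + e) ^ k := by
  induction k with
  | zero => simp
  | succ k ih =>
    have h1 := mul_le_mul_of_nonneg_left ih hG
    have h2 : G * (G + e) ^ k ≤ (G + e) ^ (k + 1) := by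
      rw [pow_succ']; apply mul_le_mul_of_nonneg_right (by linarith) (by positivity)
    have h3 := mul_le_mul_of_nonneg_left h2 (show 0 ≤ ((k : ℝ) + 1) * e by positivity)
    push_cast
    have : (G + e) ^ (k + 1 + 1) = G * (G + e) ^ (k + 1) + e * (G + e) ^ (k + 1) := by ring
    have : G ^ (k + 1 + 1) = G * G ^ (k + 1) := by ring
    nlinarith

theorem growth_aux (k : ℕ) (c : ℝ) (hc : 0 ≤ c) : ∃ C : ℝ, 0 ≤ C ∧ ∀ u : ℝ, 0 ≤ u →
    c * (u + 1) ^ k ≤ 2 * u ^ (k + 1) + C := by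
  refine ⟨c * (c * 2 ^ k + 2) ^ k, by positivity, fun u hu => ?_⟩
  by_cases h : u ≤ c * 2 ^ k + 1
  · have : c * (u + 1) ^ k ≤ c * (c * 2 ^ k + 2) ^ k := by
      apply mul_le_mul_of_nonneg_left _ hc
      exact pow_le_pow_left₀ (by linarith) (by linarith) _
    have : 0 ≤ u ^ (k + 1) := by positivity
    linarith
  · push Not at h
    have h0 : 0 ≤ c * 2 ^ k := by positivity
    have : c * (u + 1) ^ k ≤ u ^ (k + 1) := by
      calc c * (u + 1) ^ k ≤ c * (2 * u) ^ k := by gcongr; linarith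
        _ = (c * 2 ^ k) * u ^ k := by rw [mul_pow]; ring
        _ ≤ u * u ^ k := by gcongr; linarith
        _ = _ := by ring
    have h2 : 0 ≤ u ^ (k + 1) := by positivity
    have : 0 ≤ c * (c * 2 ^ k + 2) ^ k := by positivity
    linarith

theorem hpow_aux (m : ℝ) (hm : 1 / 2 ≤ m) (h e : ℝ) (hh : 0 ≤ h) (he : 0 < e) :
    h ^ m + e * (h + e) ^ (m - 1) / 2 ≤ (h + e) ^ m := by
  have hpos : 0 < h + e := by linarith
  set H := h + e with hH
  have e1 : h ^ m ≤ H ^ (m - 1/2) * h ^ ((1:ℝ)/2) := by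
    rcases hh.eq_or_lt with rfl | hh
    · rw [Real.zero_rpow (by linarith)]; positivity
    · calc h ^ m = h ^ (m - 1/2) * h ^ ((1:ℝ)/2) := by rw [← Real.rpow_add hh]; ring_nf
        _ ≤ _ := by
          gcongr
          linarith
  have e2 : h ^ ((1:ℝ)/2) ≤ H ^ (-(1:ℝ)/2) * (H - e / 2) := by
    have : H ^ (-(1:ℝ)/2) = (H ^ ((1:ℝ)/2))⁻¹ := by
      rw [← Real.rpow_neg hpos.le]; norm_num
    rw [this, ← Real.sqrt_eq_rpow, ← Real.sqrt_eq_rpow, inv_mul_eq_div, le_div_iff₀ (Real.sqrt_pos.2 hpos),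
      ← Real.sqrt_mul hh]
    apply Real.sqrt_le_iff.2
    constructor
    · linarith
    · nlinarith
  calc h ^ m + e * H ^ (m - 1) / 2 ≤ H ^ (m - 1/2) * (H ^ (-(1:ℝ)/2) * (H - e / 2)) + e * H ^ (m - 1) / 2 := by
        gcongr
        exact e1.trans (by gcongr)
    _ = H ^ (m - 1) * (H - e / 2) + e * H ^ (m - 1) / 2 := by
        rw [← mul_assoc, ← Real.rpow_add hpos]; ring_nf
    _ = H ^ (m - 1) * H ^ (1:ℝ) := by rw [Real.rpow_one]; ring
    _ = H ^ m := by rw [← Real.rpow_add hpos]; ring_nf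

theorem hneg_aux (r : ℝ) (hr : 1 ≤ r) (h e : ℝ) (hh : 0 < h) (he : 0 < e) :
    (h + e) ^ (-r) + e * (h + e) ^ (-r - 1) ≤ h ^ (-r) := by
  have hpos : 0 < h + e := by linarith
  set H := h + e with hH
  have e1 : H ^ (-r + 1) ≤ h ^ (-r + 1) :=
    Real.rpow_le_rpow_of_nonpos hh (by linarith) (by linarith)
  have e2 : H⁻¹ * (1 + e / H) ≤ h⁻¹ := by
    rw [inv_mul_eq_div, le_inv_comm₀ (by positivity) hh, inv_div, le_div_iff₀ (by positivity)]
    have : h * (1 + e / H) = h + e * (h / H) := by ring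
    rw [this]
    have : h / H ≤ 1 := by rw [div_le_one hpos]; linarith
    nlinarith
  calc H ^ (-r) + e * H ^ (-r - 1) = H ^ (-r + 1) * (H⁻¹ * (1 + e / H)) := by
        rw [Real.rpow_add hpos, Real.rpow_sub hpos, Real.rpow_one]; field_simp
    _ ≤ h ^ (-r + 1) * h⁻¹ := by gcongr
    _ = h ^ (-r) := by rw [Real.rpow_add hh, Real.rpow_one]; field_simp

theorem bellman (m : ℝ) (hm : 1 / 2 ≤ m) : ∃ (k : ℕ) (C : ℝ), 0 ≤ C ∧ m ≤ k + 1 ∧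
    ∀ κ d δ h G1 G2 : ℝ, 0 ≤ κ → 0 ≤ h → (h = 0 → κ + d ^ 2 = 0) → 0 ≤ G1 → 0 ≤ G2 →
      G1 ≤ κ + (d + δ) ^ 2 → G2 ≤ κ + (d - δ) ^ 2 →
      G1 ^ (k + 1) * (h + δ ^ 2) ^ (m - (k + 1)) + G2 ^ (k + 1) * (h + δ ^ 2) ^ (m - (k + 1)) +
        2 * (C * h ^ m) ≤
      2 * ((κ + d ^ 2) ^ (k + 1) * h ^ (m - (k + 1))) + 2 * (C * (h + δ ^ 2) ^ m) := by
  obtain ⟨k, hk⟩ := exists_nat_ge m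
  obtain ⟨a, b, ha, hb, hab⟩ := poly_aux k
  obtain ⟨C, hC, hg⟩ := growth_aux k (2 * (k + 1) + a) (by positivity)
  refine ⟨k, C, hC, by linarith, fun κ d δ h G1 G2 hκ hh h0 hG1 hG2 h1 h2 => ?_⟩
  set G := κ + d ^ 2 with hGdef
  have hG : 0 ≤ G := by positivity
  set e := δ ^ 2 with he
  have he0 : 0 ≤ e := by positivity
  set r := k + 1 - m with hr
  have hmr : m - (k + 1) = -r := by rw [hr]; ring
  rw [hmr]
  rcases he0.eq_or_lt with he0' | hepos
  · have hδ : δ = 0 := by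
      have : δ ^ 2 = 0 := by rw [← he, ← he0']
      exact pow_eq_zero_iff (by norm_num) |>.1 this
    rw [hδ] at h1 h2
    simp only [add_zero, sub_zero] at h1 h2
    rw [← he0', add_zero]
    have : G1 ^ (k + 1) ≤ G ^ (k + 1) := by gcongr
    have : G2 ^ (k + 1) ≤ G ^ (k + 1) := by gcongr
    have : 0 ≤ h ^ (-r) := by positivity
    nlinarith
  have hpos : 0 < h + e := by linarith
  have key1 : G1 ^ (k + 1) + G2 ^ (k + 1) ≤ 2 * G ^ (k + 1) + (2 * (k + 1) + a) * e * (G + e) ^ k := by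
    have hd : d ^ 2 ≤ G := by rw [hGdef]; linarith
    obtain ⟨q, -⟩ := hab (G + e) (2 * d * δ) e (by positivity) (by
      rw [abs_le]; constructor <;> nlinarith [sq_nonneg (d + δ), sq_nonneg (d - δ)]) he0 (by
      have : (2 * d * δ) ^ 2 = 4 * e * d ^ 2 := by rw [he]; ring
      rw [this]
      gcongr
      linarith)
    have t1 : G1 ^ (k + 1) ≤ (G + e + 2 * d * δ) ^ (k + 1) := by
      gcongr; rw [hGdef, he]; linarith
    have t2 : G2 ^ (k + 1) ≤ (G + e - 2 * d * δ) ^ (k + 1) := by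
      gcongr; rw [hGdef, he]; linarith
    have := pow_aux k G e hG he0
    nlinarith
  have key2 : G ^ (k + 1) * (h + e) ^ (-r) + G ^ (k + 1) * (e * (h + e) ^ (-r - 1)) ≤ G ^ (k + 1) * h ^ (-r) := by
    rcases hh.eq_or_lt with hh | hh
    · rw [h0 hh.symm]; simp
    · rw [← mul_add]
      gcongr
      exact hneg_aux r (by linarith) h e hh hepos
  have key3 := hpow_aux m hm h e hh hepos
  have key4 : (2 * (k + 1) + a) * (G + e) ^ k * (h + e) ^ (-r) ≤
      2 * G ^ (k + 1) * (h + e) ^ (-r - 1) + C * (h + e) ^ (m - 1) := by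
    set H := h + e
    have := hg (G / H) (by positivity)
    have p1 : H ^ (m - 1) = H ^ (-r) * H ^ k := by
      rw [← Real.rpow_natCast, ← Real.rpow_add hpos]; congr 1; rw [hr]; ring
    have p2 : H ^ (-r - 1) = H ^ (-r) * H⁻¹ := by
      rw [Real.rpow_sub hpos, Real.rpow_one]; rfl
    have p3 : (G + e) ^ k ≤ (G / H + 1) ^ k * H ^ k := by
      rw [← mul_pow]
      gcongr
      rw [add_mul, div_mul_cancel₀ _ hpos.ne']
      linarith
    calc _ ≤ (2 * (k + 1) + a) * ((G / H + 1) ^ k * H ^ k) * H ^ (-r) := by gcongr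
      _ = ((2 * (k + 1) + a) * (G / H + 1) ^ k) * (H ^ (-r) * H ^ k) := by ring
      _ ≤ (2 * (G / H) ^ (k + 1) + C) * (H ^ (-r) * H ^ k) := by gcongr
      _ = _ := by rw [p1, p2, div_pow, pow_succ H]; field_simp
  have hHr : 0 ≤ (h + e) ^ (-r) := by positivity
  calc G1 ^ (k + 1) * (h + e) ^ (-r) + G2 ^ (k + 1) * (h + e) ^ (-r) + 2 * (C * h ^ m)
      = (G1 ^ (k + 1) + G2 ^ (k + 1)) * (h + e) ^ (-r) + 2 * (C * h ^ m) := by ring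
    _ ≤ (2 * G ^ (k + 1) + (2 * (k + 1) + a) * e * (G + e) ^ k) * (h + e) ^ (-r) + 2 * (C * h ^ m) := by
        gcongr
    _ ≤ _ := by
        have q1 := mul_le_mul_of_nonneg_left key4 he0
        have q2 := mul_le_mul_of_nonneg_left key3 hC
        nlinarith

/-- One step of the greedy stopping procedure: current displacement and counter. -/
def jstep (μ : ℝ) (s : ℝ × ℕ) (v : ℝ) : ℝ × ℕ :=
  if |s.1 + v| ≤ μ then (s.1 + v, s.2) else (0, s.2 + 1)

/-- Greedy stopping state after `n` steps. -/
def jst (μ : ℝ) (u : ℕ → ℝ) : ℕ → ℝ × ℕ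
  | 0 => (0, 0)
  | n + 1 => jstep μ (jst μ u n) (u n)

/-- partial square function -/
def jh (u : ℕ → ℝ) (n : ℕ) : ℝ := ∑ j ∈ Finset.range n, u j ^ 2

/-- Bellman quantity -/
def jG (μ : ℝ) (u : ℕ → ℝ) (n : ℕ) : ℝ := μ ^ 2 * (jst μ u n).2 + (jst μ u n).1 ^ 2

theorem jst_abs_le {μ : ℝ} (hμ : 0 ≤ μ) (u : ℕ → ℝ) (n : ℕ) : |(jst μ u n).1| ≤ μ := by
  cases n with
  | zero => simpa [jst]
  | succ n =>
    simp only [jst, jstep]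
    split_ifs with h
    · exact h
    · simpa

theorem jst_succ_cases (μ : ℝ) (u : ℕ → ℝ) (n : ℕ) :
    ((jst μ u (n+1)).2 = (jst μ u n).2 ∧ (jst μ u (n+1)).1 = (jst μ u n).1 + u n) ∨
    (jst μ u (n+1)).2 = (jst μ u n).2 + 1 := by
  simp only [jst, jstep]
  split_ifs <;> simp

theorem jst_mono (μ : ℝ) (u : ℕ → ℝ) : Monotone (fun n => (jst μ u n).2) := by
  apply monotone_nat_of_le_succ
  intro n
  rcases jst_succ_cases μ u n with ⟨h, -⟩ | h <;> rw [h]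
  exact Nat.le_succ _

theorem jst_eq (μ : ℝ) (u : ℕ → ℝ) (s l : ℕ) (h : (jst μ u (s + l)).2 = (jst μ u s).2) :
    (jst μ u (s + l)).1 = (jst μ u s).1 + ∑ j ∈ Finset.range l, u (s + j) := by
  induction l with
  | zero => simp
  | succ l ih =>
    have m1 : (jst μ u s).2 ≤ (jst μ u (s+l)).2 := jst_mono μ u (Nat.le_add_right _ _)
    have m2 := jst_succ_cases μ u (s + l)
    rw [← add_assoc] at h
    rw [h] at m2
    rcases m2 with ⟨h1, h2⟩ | h1
    · rw [← add_assoc, h2, ih h1.symm, Finset.sum_range_succ]; ring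
    · omega

theorem jst_jump {μ : ℝ} (hμ : 0 ≤ μ) (u : ℕ → ℝ) (s l : ℕ)
    (h : 2 * μ < |∑ j ∈ Finset.range l, u (s + j)|) :
    (jst μ u s).2 + 1 ≤ (jst μ u (s + l)).2 := by
  by_contra hc
  have m1 : (jst μ u s).2 ≤ (jst μ u (s+l)).2 := jst_mono μ u (Nat.le_add_right _ _)
  have := jst_eq μ u s l (by omega)
  have a1 := jst_abs_le hμ u s
  have a2 := jst_abs_le hμ u (s + l)
  have : ∑ j ∈ Finset.range l, u (s + j) = (jst μ u (s + l)).1 - (jst μ u s).1 := by linarith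
  rw [this] at h
  have := abs_sub (jst μ u (s + l)).1 (jst μ u s).1
  linarith

theorem jG_succ_le {μ : ℝ} (hμ : 0 ≤ μ) (u : ℕ → ℝ) (n : ℕ) :
    jG μ u (n + 1) ≤ μ ^ 2 * (jst μ u n).2 + ((jst μ u n).1 + u n) ^ 2 := by
  simp only [jG, jst, jstep]
  split_ifs with h
  · exact le_rfl
  · push Not at h
    have : μ ^ 2 ≤ ((jst μ u n).1 + u n) ^ 2 := by
      rw [← sq_abs ((jst μ u n).1 + u n)]; gcongr
    push_cast
    linarith

theorem jG_nonneg (μ : ℝ) (u : ℕ → ℝ) (n : ℕ) : 0 ≤ jG μ u n := by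
  unfold jG; positivity

theorem jh_nonneg (u : ℕ → ℝ) (n : ℕ) : 0 ≤ jh u n := by
  unfold jh; positivity

theorem jh_succ (u : ℕ → ℝ) (n : ℕ) : jh u (n + 1) = jh u n + u n ^ 2 := by
  simp [jh, Finset.sum_range_succ]

theorem jst_zero {μ : ℝ} (hμ : 0 ≤ μ) (u : ℕ → ℝ) (n : ℕ) (h : jh u n = 0) :
    jst μ u n = (0, 0) := by
  induction n with
  | zero => rfl
  | succ n ih =>
    rw [jh_succ] at h
    have h1 := jh_nonneg u n
    have h2 := sq_nonneg (u n)
    have h3 : u n = 0 := by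
      have : u n ^ 2 = 0 := by linarith
      exact pow_eq_zero_iff (by norm_num) |>.1 this
    simp [jst, ih (by linarith), jstep, h3, hμ]

theorem jst_congr (μ : ℝ) (u v : ℕ → ℝ) (n : ℕ) (h : ∀ j < n, u j = v j) :
    jst μ u n = jst μ v n := by
  induction n with
  | zero => rfl
  | succ n ih =>
    simp only [jst]
    rw [ih (fun j hj => h j (by omega)), h n (by omega)]

theorem jh_congr (u v : ℕ → ℝ) (n : ℕ) (h : ∀ j < n, u j = v j) : jh u n = jh v n := by
  unfold jh
  exact Finset.sum_congr rfl (fun j hj => by rw [h j (Finset.mem_range.1 hj)])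

/-- counting lemma at a point -/
theorem jcount {μ : ℝ} (hμ : 0 ≤ μ) (w : ℤ → ℝ) (N : ℕ → ℤ) (hN : ∀ k, N k ≤ N (k + 1)) (a : ℤ)
    (ha : a ≤ N 0) (L : ℕ) :
    ((Finset.range L).filter
      (fun k => 2 * μ < |∑ i ∈ Finset.Ioc (N k) (N (k + 1)), w i|)).card ≤
      (jst μ (fun j : ℕ => w (a + 1 + j)) (N L - a).toNat).2 := by
  have hmono : Monotone N := monotone_nat_of_le_succ hN
  induction L with
  | zero => simp
  | succ L ih =>
    rw [Finset.range_add_one, Finset.filter_insert]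
    have h0 : a ≤ N L := ha.trans (hmono (Nat.zero_le _))
    have h1 : (N (L+1) - a).toNat = (N L - a).toNat + (N (L+1) - N L).toNat := by
      have := hN L; omega
    split_ifs with h
    · rw [Finset.card_insert_of_notMem (by simp)]
      rw [h1]
      refine le_trans (Nat.add_le_add_right ih 1) (jst_jump hμ _ _ _ ?_)
      refine h.trans_eq ?_
      congr 1
      symm
      apply Finset.sum_bij (fun (j : ℕ) _ => a + 1 + (((N L - a).toNat + j : ℕ) : ℤ))
      · intro j hj; simp at hj ⊢; omega
      · intro j hj j' hj' e; simp at e; omega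
      · intro i hi
        simp at hi
        exact ⟨(i - N L - 1).toNat, by simp; omega, by push_cast; omega⟩
      · intro j hj; rfl
    · refine ih.trans (jst_mono _ _ ?_)
      have := hN L
      omega

theorem jmeas (μ : ℝ) (u : ℕ → ℝ → ℝ) (hu : ∀ n, Measurable (u n)) (n : ℕ) :
    Measurable (fun x => jst μ (fun j => u j x) n) := by
  induction n with
  | zero => exact measurable_const
  | succ n ih =>
    simp only [jst, jstep]
    have h1 : Measurable (fun x => (jst μ (fun j => u j x) n).1 + u n x) := ih.fst.add (hu n)
    have h2 : Measurable (fun x => (jst μ (fun j => u j x) n).2) := ih.snd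
    refine Measurable.ite ?_ (h1.prodMk h2) (measurable_const.prodMk (h2.add_const 1))
    exact measurableSet_le (continuous_abs.measurable.comp h1) measurable_const

theorem jGmeas (μ : ℝ) (u : ℕ → ℝ → ℝ) (hu : ∀ n, Measurable (u n)) (n : ℕ) :
    Measurable (fun x => jG μ (fun j => u j x) n) := by
  unfold jG
  have := jmeas μ u hu n
  refine Measurable.add (Measurable.const_mul ?_ _) (this.fst.pow_const 2)
  exact (measurable_from_top (f := fun n : ℕ => (n : ℝ))).comp this.snd

theorem jhmeas (u : ℕ → ℝ → ℝ) (hu : ∀ n, Measurable (u n)) (n : ℕ) :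
    Measurable (fun x => jh (fun j => u j x) n) := by
  unfold jh
  exact Finset.measurable_fun_sum _ (fun j _ => (hu j).pow_const 2)

theorem mem_dyadic_iff (i m : ℤ) (x : ℝ) : x ∈ dyadicInterval i m ↔ ⌊x * (2:ℝ) ^ i⌋ = m := by
  have h2 : (0:ℝ) < 2 ^ i := by positivity
  rw [dyadicInterval, Set.mem_Ico, Int.floor_eq_iff, zpow_neg, ← div_eq_mul_inv, ← div_eq_mul_inv,
    div_le_iff₀ h2, lt_div_iff₀ h2]

theorem floor_half (i : ℤ) (x : ℝ) : ⌊x * (2:ℝ) ^ (i - 1)⌋ = ⌊x * (2:ℝ) ^ i⌋ / 2 := by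
  have : x * (2:ℝ) ^ (i - 1) = (x * (2:ℝ) ^ i) / ((2:ℕ):ℝ) := by
    rw [zpow_sub₀ (by norm_num)]; simp; ring
  rw [this, Int.floor_div_natCast]; rfl

theorem floor_shift (i : ℤ) (x : ℝ) :
    ⌊(x + (2:ℝ) ^ (-i)) * (2:ℝ) ^ i⌋ = ⌊x * (2:ℝ) ^ i⌋ + 1 := by
  have : (x + (2:ℝ) ^ (-i)) * (2:ℝ) ^ i = x * (2:ℝ) ^ i + 1 := by
    rw [add_mul, ← zpow_add₀ (by norm_num)]; simp
  rw [this, Int.floor_add_one]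

theorem floor_coarse (i : ℤ) (x : ℝ) (hx : Even ⌊x * (2:ℝ) ^ i⌋) (l : ℕ) :
    ⌊(x + (2:ℝ) ^ (-i)) * (2:ℝ) ^ (i - 1 - l)⌋ = ⌊x * (2:ℝ) ^ (i - 1 - l)⌋ := by
  induction l with
  | zero =>
    obtain ⟨r, hr⟩ := hx
    simp only [Nat.cast_zero, sub_zero]
    rw [floor_half, floor_half, floor_shift]; omega
  | succ l ih =>
    have : i - 1 - ((l + 1 : ℕ) : ℤ) = i - 1 - l - 1 := by push_cast; ring
    rw [this, floor_half, floor_half, ih]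

theorem fam_coarse {f : ℤ → ℝ → ℝ} (hf : IsDiscLPFamily f) (i j : ℤ) (hj : j < i) (x : ℝ)
    (hx : Even ⌊x * (2:ℝ) ^ i⌋) : f j (x + (2:ℝ) ^ (-i)) = f j x := by
  have : j = i - 1 - ((i - 1 - j).toNat : ℤ) := by omega
  have h := floor_coarse i x hx (i - 1 - j).toNat
  rw [← this] at h
  exact hf.2.1 j _ _ ((mem_dyadic_iff _ _ _).2 h) _ ((mem_dyadic_iff _ _ _).2 rfl)

theorem dyadic_split (i m : ℤ) : dyadicInterval (i - 1) m =
    dyadicInterval i (2 * m) ∪ dyadicInterval i (2 * m + 1) := by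
  ext x
  rw [Set.mem_union, mem_dyadic_iff, mem_dyadic_iff, mem_dyadic_iff, floor_half]
  omega

theorem dyadic_meas (i m : ℤ) : MeasurableSet (dyadicInterval i m) := measurableSet_Ico

theorem setIntegral_dyadic {f : ℤ → ℝ → ℝ} (hf : IsDiscLPFamily f) (i m : ℤ) (x : ℝ)
    (hx : x ∈ dyadicInterval i m) : ∫ y in dyadicInterval i m, f i y = (2:ℝ) ^ (-i) * f i x := by
  rw [setIntegral_congr_fun (g := fun _ => f i x) (dyadic_meas i m)
    (fun y hy => hf.2.1 i m y hy x hx)]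
  rw [setIntegral_const]
  have : (volume.real (dyadicInterval i m)) = (2:ℝ) ^ (-i) := by
    have h2 : (0:ℝ) < 2 ^ (-i) := by positivity
    rw [dyadicInterval, Real.volume_real_Ico_of_le (by nlinarith)]; ring
  rw [this]; rfl

theorem fam_neg {f : ℤ → ℝ → ℝ} (hf : IsDiscLPFamily f) (i : ℤ) (x : ℝ)
    (hx : Even ⌊x * (2:ℝ) ^ i⌋) : f i (x + (2:ℝ) ^ (-i)) = - f i x := by
  obtain ⟨r, hr⟩ := hx
  have hx1 : x ∈ dyadicInterval i (2 * r) := (mem_dyadic_iff _ _ _).2 (by rw [hr]; ring)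
  have hx2 : x + (2:ℝ) ^ (-i) ∈ dyadicInterval i (2 * r + 1) :=
    (mem_dyadic_iff _ _ _).2 (by rw [floor_shift, hr]; ring)
  have h := hf.2.2 i r
  have hint : ∀ m, IntegrableOn (f i) (dyadicInterval i m) := fun m =>
    ((hf.1 i).integrableOn_isCompact isCompact_Icc).mono_set Set.Ico_subset_Icc_self
  rw [dyadic_split, setIntegral_union _ (dyadic_meas _ _) (hint _) (hint _),
    setIntegral_dyadic hf i _ x hx1, setIntegral_dyadic hf i _ _ hx2] at h
  · have h2 : (0:ℝ) < 2 ^ (-i) := by positivity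
    have : (2:ℝ) ^ (-i) * (f i x + f i (x + (2:ℝ) ^ (-i))) = 0 := by linarith
    rcases mul_eq_zero.1 this with h | h
    · exact absurd h h2.ne'
    · linarith
  · rw [Set.disjoint_left]
    intro y h1 h2
    rw [mem_dyadic_iff] at h1 h2
    omega

theorem fam_meas {f : ℤ → ℝ → ℝ} (hf : IsDiscLPFamily f) (i : ℤ) : Measurable (f i) := by
  have : f i = (fun m : ℤ => f i ((m:ℝ) * (2:ℝ) ^ (-i))) ∘ (fun x => ⌊x * (2:ℝ) ^ i⌋) := by
    ext x
    refine hf.2.1 i ⌊x * (2:ℝ) ^ i⌋ _ ((mem_dyadic_iff _ _ _).2 rfl) _ ((mem_dyadic_iff _ _ _).2 ?_)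
    rw [mul_assoc, ← zpow_add₀ (by norm_num)]; simp
  rw [this]
  exact measurable_from_top.comp (Int.measurable_floor.comp (measurable_id.mul_const _))

theorem even_meas (i : ℤ) : MeasurableSet {x : ℝ | Even ⌊x * (2:ℝ) ^ i⌋} :=
  (Int.measurable_floor.comp (measurable_id.mul_const ((2:ℝ) ^ i)))
    (MeasurableSet.of_discrete (s := {n : ℤ | Even n}))

theorem lint_split (i : ℤ) (F : ℝ → ℝ≥0∞) (hF : Measurable F) :
    ∫⁻ x, F x = ∫⁻ x in {x : ℝ | Even ⌊x * (2:ℝ) ^ i⌋}, (F x + F (x + (2:ℝ) ^ (-i))) := by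
  have hA := even_meas i
  rw [lintegral_add_left hF, ← lintegral_add_compl F hA]
  congr 1
  rw [← lintegral_indicator hA, ← lintegral_indicator hA.compl,
    ← lintegral_add_right_eq_self _ ((2:ℝ) ^ (-i))]
  congr 1
  ext x
  simp only [Set.indicator, Set.mem_compl_iff, Set.mem_ofPred_eq, floor_shift]
  congr 1
  simp

theorem step_ineq {f : ℤ → ℝ → ℝ} (hf : IsDiscLPFamily f) (m μ C : ℝ) (k : ℕ) (hC : 0 ≤ C)
    (hμ : 0 ≤ μ)
    (hB : ∀ κ d δ h G1 G2 : ℝ, 0 ≤ κ → 0 ≤ h → (h = 0 → κ + d ^ 2 = 0) → 0 ≤ G1 → 0 ≤ G2 →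
      G1 ≤ κ + (d + δ) ^ 2 → G2 ≤ κ + (d - δ) ^ 2 →
      G1 ^ (k + 1) * (h + δ ^ 2) ^ (m - (k + 1)) + G2 ^ (k + 1) * (h + δ ^ 2) ^ (m - (k + 1)) +
        2 * (C * h ^ m) ≤
      2 * ((κ + d ^ 2) ^ (k + 1) * h ^ (m - (k + 1))) + 2 * (C * (h + δ ^ 2) ^ m))
    (a : ℤ) (P Q : ℕ → ℝ → ℝ≥0∞)
    (hP : ∀ n x, P n x = ENNReal.ofReal (jG μ (fun j : ℕ => f (a + 1 + j) x) n ^ (k + 1) *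
      jh (fun j : ℕ => f (a + 1 + j) x) n ^ (m - (k + 1))))
    (hQ : ∀ n x, Q n x = ENNReal.ofReal (C * jh (fun j : ℕ => f (a + 1 + j) x) n ^ m))
    (hPm : ∀ n, Measurable (P n)) (hQm : ∀ n, Measurable (Q n)) (n : ℕ) :
    (∫⁻ x, P (n + 1) x) + (∫⁻ x, Q n x) ≤ (∫⁻ x, P n x) + (∫⁻ x, Q (n + 1) x) := by
  rw [← lintegral_add_left (hPm _), ← lintegral_add_left (hPm _)]
  rw [lint_split (a + 1 + n) (fun x => P (n + 1) x + Q n x) ((hPm _).add (hQm _)),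
    lint_split (a + 1 + n) (fun x => P n x + Q (n + 1) x) ((hPm _).add (hQm _))]
  refine setLIntegral_mono' (even_meas _) (fun x hx => ?_)
  set y := x + (2:ℝ) ^ (-(a + 1 + (n:ℤ))) with hy
  set u := fun j : ℕ => f (a + 1 + j) x with hu
  set v := fun j : ℕ => f (a + 1 + j) y with hv
  have huv : ∀ j < n, v j = u j := fun j hj => fam_coarse hf _ _ (by omega) x hx
  have hn : v n = - u n := fam_neg hf _ x hx
  have e1 : jst μ v n = jst μ u n := jst_congr _ _ _ _ huv
  have e2 : jh v n = jh u n := jh_congr _ _ _ huv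
  have e3 : jh v (n + 1) = jh u (n + 1) := by rw [jh_succ, jh_succ, e2, hn]; ring
  have eG : jG μ v n = jG μ u n := by simp only [jG, e1]
  have hPn : P n y = P n x := by rw [hP, hP]; simp only [← hu, ← hv, eG, e2]
  have hQn : Q n y = Q n x := by rw [hQ, hQ]; simp only [← hu, ← hv, e2]
  have hQn' : Q (n + 1) y = Q (n + 1) x := by rw [hQ, hQ]; simp only [← hu, ← hv, e3]
  rw [hPn, hQn, hQn']
  have key := hB (μ ^ 2 * (jst μ u n).2) (jst μ u n).1 (u n) (jh u n) (jG μ u (n+1)) (jG μ v (n+1))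
    (by positivity) (jh_nonneg _ _) (fun h => by simp [jst_zero hμ u n h]) (jG_nonneg _ _ _)
    (jG_nonneg _ _ _) (jG_succ_le hμ u n) (by
      have := jG_succ_le hμ v n
      rwa [e1, hn, ← sub_eq_add_neg] at this)
  rw [← jh_succ] at key
  rw [hP, hP, hP, hQ, hQ]
  simp only [← hu, ← hv, e3]
  have g1 := jG_nonneg μ u (n+1)
  have g2 := jG_nonneg μ v (n+1)
  have g3 := jG_nonneg μ u n
  have g4 := jh_nonneg u n
  have g5 := jh_nonneg u (n+1)
  rw [← ENNReal.ofReal_add (by positivity) (by positivity), ← ENNReal.ofReal_add (by positivity) (by positivity),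
    ← ENNReal.ofReal_add (by positivity) (by positivity), ← ENNReal.ofReal_add (by positivity) (by positivity),
    ← ENNReal.ofReal_add (by positivity) (by positivity)]
  apply ENNReal.ofReal_le_ofReal
  change _ ≤ 2 * (jG μ u n ^ (k + 1) * _) + _ at key
  linarith

theorem main_aux (m : ℝ) (hm : 1 / 2 ≤ m) : ∃ C : ℝ, 0 ≤ C ∧ ∀ f : ℤ → ℝ → ℝ, IsDiscLPFamily f →
    ∀ μ : ℝ, 0 ≤ μ → ∀ (a : ℤ) (n : ℕ),
    ∫⁻ x, ENNReal.ofReal (jG μ (fun j : ℕ => f (a + 1 + j) x) n ^ m) ≤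
    ENNReal.ofReal C * ∫⁻ x, (∑' i : ℤ, (ENNReal.ofReal |f i x|) ^ (2 : ℝ)) ^ m := by
  obtain ⟨k, C, hC, hk, hB⟩ := bellman m hm
  have hm0 : 0 < m := by linarith
  refine ⟨C + 1, by linarith, fun f hf μ hμ a n => ?_⟩
  by_cases htop : ∫⁻ x, (∑' i : ℤ, (ENNReal.ofReal |f i x|) ^ (2 : ℝ)) ^ m = ⊤
  · rw [htop, ENNReal.mul_top (by simp; linarith)]; exact le_top
  have hum : ∀ j : ℕ, Measurable (f (a + 1 + j)) := fun j => fam_meas hf _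
  have hGm := fun n => jGmeas μ (fun j : ℕ => f (a + 1 + j)) hum n
  have hHm := fun n => jhmeas (fun j : ℕ => f (a + 1 + j)) hum n
  have hbound : ∀ n x, ENNReal.ofReal (jh (fun j : ℕ => f (a + 1 + j) x) n ^ m) ≤
      (∑' i : ℤ, (ENNReal.ofReal |f i x|) ^ (2 : ℝ)) ^ m := by
    intro n x
    rw [← ENNReal.ofReal_rpow_of_nonneg (jh_nonneg _ _) hm0.le]
    gcongr
    rw [jh, ENNReal.ofReal_sum_of_nonneg (fun _ _ => sq_nonneg _)]
    have : ∀ i : ℤ, ENNReal.ofReal (f i x ^ 2) = ENNReal.ofReal |f i x| ^ (2:ℝ) := by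
      intro i
      rw [ENNReal.ofReal_rpow_of_nonneg (abs_nonneg _) (by norm_num)]
      simp
    simp only [this]
    rw [← Finset.sum_image (f := fun i : ℤ => ENNReal.ofReal |f i x| ^ (2:ℝ))
      (g := fun j : ℕ => a + 1 + (j:ℤ)) (fun i _ j _ h => by simpa using h)]
    exact ENNReal.sum_le_tsum _
  set P : ℕ → ℝ → ℝ≥0∞ := fun n x => ENNReal.ofReal (jG μ (fun j : ℕ => f (a + 1 + j) x) n ^ (k + 1) *
      jh (fun j : ℕ => f (a + 1 + j) x) n ^ (m - (k + 1))) with hP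
  set Q : ℕ → ℝ → ℝ≥0∞ := fun n x => ENNReal.ofReal (C * jh (fun j : ℕ => f (a + 1 + j) x) n ^ m) with hQ
  have hPm : ∀ n, Measurable (P n) := fun n =>
    (((hGm n).pow_const _).mul ((hHm n).pow_const _)).ennreal_ofReal
  have hHmm : ∀ n, Measurable (fun x => ENNReal.ofReal (jh (fun j : ℕ => f (a + 1 + j) x) n ^ m)) :=
    fun n => ((hHm n).pow_const _).ennreal_ofReal
  have hQm : ∀ n, Measurable (Q n) := fun n => (((hHm n).pow_const _).const_mul _).ennreal_ofReal
  have hQle : ∀ n, ∫⁻ x, Q n x ≤ ENNReal.ofReal C *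
      ∫⁻ x, (∑' i : ℤ, (ENNReal.ofReal |f i x|) ^ (2 : ℝ)) ^ m := by
    intro n
    simp only [hQ, ENNReal.ofReal_mul hC]
    rw [lintegral_const_mul _ (hHmm n)]
    gcongr
    exact hbound n _
  have hQfin : ∀ n, ∫⁻ x, Q n x ≠ ⊤ := fun n =>
    ne_top_of_le_ne_top (ENNReal.mul_ne_top ENNReal.ofReal_ne_top htop) (hQle n)
  have hPQ : ∀ n, ∫⁻ x, P n x ≤ ∫⁻ x, Q n x := by
    intro n
    induction n with
    | zero => simp [hP, jG, jst]
    | succ n ih =>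
      have h1 := step_ineq hf m μ C k hC hμ hB a P Q (fun _ _ => rfl) (fun _ _ => rfl) hPm hQm n
      have h2 := h1.trans (add_le_add_left ih _)
      rw [add_comm] at h2
      exact (ENNReal.add_le_add_iff_left (hQfin n)).1 h2
  calc ∫⁻ x, ENNReal.ofReal (jG μ (fun j : ℕ => f (a + 1 + j) x) n ^ m)
      ≤ ∫⁻ x, (P n x + ENNReal.ofReal (jh (fun j : ℕ => f (a + 1 + j) x) n ^ m)) := by
        apply lintegral_mono
        intro x
        have g1 := jG_nonneg μ (fun j : ℕ => f (a + 1 + j) x) n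
        have g2 := jh_nonneg (fun j : ℕ => f (a + 1 + j) x) n
        simp only [hP]
        rw [← ENNReal.ofReal_add (by positivity) (by positivity)]
        apply ENNReal.ofReal_le_ofReal
        have g3 : jh (fun j : ℕ => f (a + 1 + j) x) n = 0 → jG μ (fun j : ℕ => f (a + 1 + j) x) n = 0 := by
          intro h; simp [jG, jst_zero hμ _ n h]
        generalize jG μ (fun j : ℕ => f (a + 1 + j) x) n = G at *
        generalize jh (fun j : ℕ => f (a + 1 + j) x) n = h at *
        rcases le_or_gt G h with hle | hlt
        · have : G ^ m ≤ h ^ m := by gcongr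
          have : 0 ≤ G ^ (k + 1) * h ^ (m - (k + 1)) := by positivity
          linarith
        · rcases g2.eq_or_lt with h0 | h0
          · have := g3 h0.symm; linarith
          · have hG : 0 < G := by linarith
            have e : G ^ m = G ^ (k + 1) * G ^ (m - (k + 1)) := by
              rw [← Real.rpow_natCast, ← Real.rpow_add hG]; congr 1; push_cast; ring
            have : G ^ (m - (k + 1)) ≤ h ^ (m - (k + 1)) :=
              Real.rpow_le_rpow_of_nonpos h0 hlt.le (by linarith)
            rw [e]
            have : G ^ (k + 1) * G ^ (m - (k + 1)) ≤ G ^ (k + 1) * h ^ (m - (k + 1)) := by gcongr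
            have : 0 ≤ h ^ m := by positivity
            linarith
    _ = (∫⁻ x, P n x) + ∫⁻ x, ENNReal.ofReal (jh (fun j : ℕ => f (a + 1 + j) x) n ^ m) :=
        lintegral_add_left (hPm n) _
    _ ≤ ENNReal.ofReal C * (∫⁻ x, (∑' i : ℤ, (ENNReal.ofReal |f i x|) ^ (2 : ℝ)) ^ m) +
        ∫⁻ x, (∑' i : ℤ, (ENNReal.ofReal |f i x|) ^ (2 : ℝ)) ^ m := by
        gcongr
        · exact (hPQ n).trans (hQle n)
        · exact hbound n _
    _ = _ := by
        rw [ENNReal.ofReal_add hC (by norm_num), add_mul]; simp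

/-- pointwise bound of the jump count by the greedy counters -/
theorem encard_le_liminf {μ : ℝ} (hμ : 0 ≤ μ) (w : ℤ → ℝ) (N : ℕ → ℤ) (hN : ∀ k, N k ≤ N (k + 1)) :
    (({k : ℕ | 2 * μ < |∑ i ∈ Finset.Ioc (N k) (N (k + 1)), w i|}.encard : ℕ∞) : ℝ≥0∞) ≤
      Filter.liminf (fun M : ℕ =>
        (((jst μ (fun j : ℕ => w (-(M:ℤ) + 1 + j)) (2 * M)).2 : ℕ) : ℝ≥0∞)) Filter.atTop := by
  set S := {k : ℕ | 2 * μ < |∑ i ∈ Finset.Ioc (N k) (N (k + 1)), w i|} with hS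
  set B := Filter.liminf (fun M : ℕ =>
        (((jst μ (fun j : ℕ => w (-(M:ℤ) + 1 + j)) (2 * M)).2 : ℕ) : ℝ≥0∞)) Filter.atTop
  have key : ∀ n : ℕ, (n : ℕ∞) ≤ S.encard → (n : ℝ≥0∞) ≤ B := by
    intro n hn
    obtain ⟨T, hTS, hT⟩ := Set.exists_subset_encard_eq hn
    have hfin : T.Finite := Set.finite_of_encard_eq_coe hT
    obtain ⟨L, hL⟩ := hfin.bddAbove
    apply Filter.le_liminf_of_le
    · exact Filter.isCobounded_ge_of_top
    filter_upwards [Filter.eventually_ge_atTop ((N 0).natAbs + (N (L + 1)).natAbs)] with M hM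
    have h1 := jcount hμ w N hN (-(M:ℤ)) (by omega) (L + 1)
    have h2 := jst_mono μ (fun j : ℕ => w (-(M:ℤ) + 1 + j))
      (show (N (L+1) - (-(M:ℤ))).toNat ≤ 2 * M by omega)
    have h3 : n ≤ ((Finset.range (L + 1)).filter
      (fun k => 2 * μ < |∑ i ∈ Finset.Ioc (N k) (N (k + 1)), w i|)).card := by
      have : T ⊆ ((Finset.range (L + 1)).filter
        (fun k => 2 * μ < |∑ i ∈ Finset.Ioc (N k) (N (k + 1)), w i|) : Finset ℕ) := by
        intro k hk
        have := hL hk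
        have h' := hTS hk
        simp only [Finset.coe_filter, Finset.mem_range, Set.mem_ofPred_eq]
        exact ⟨by omega, h'⟩
      have := Set.encard_le_encard this
      rw [hT, Set.encard_coe_eq_coe_finsetCard] at this
      exact_mod_cast this
    exact_mod_cast h3.trans (h1.trans h2)
  rcases eq_or_ne S.encard ⊤ with h | h
  · rw [h] at key ⊢
    have : B = ⊤ := ENNReal.eq_top_of_forall_nnreal_le (fun r => by
      obtain ⟨n, hn⟩ := exists_nat_ge r
      refine le_trans ?_ (key n le_top)
      exact_mod_cast hn)
    rw [this]; exact le_top
  · lift S.encard to ℕ using h with n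
    simpa using key n le_rfl

/-- Bourgain's weak-type jump-counting endpoint at `r = t = 2`, discrete case. -/
theorem discrete_weak_jump_inequality (p : ℝ) (hp : 1 < p) :
    ∃ C : ℝ≥0, 0 < C ∧
      ∀ (f : ℤ → ℝ → ℝ), IsDiscLPFamily f →
      ∀ (Nk : ℕ → ℝ → ℤ), IsJumpCollection Nk →
      ∀ lam : ℝ, 0 < lam →
      (∫⁻ x : ℝ,
          (ENNReal.ofReal lam *
            (({k : ℕ | lam < |∑ i ∈ Finset.Ioc (Nk k x) (Nk (k + 1) x), f i x|}.encard
              : ℝ≥0∞)) ^ ((1 : ℝ) / 2)) ^ p) ^ (1 / p)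
        ≤ (C : ℝ≥0∞) *
      (∫⁻ x : ℝ,
          ((∑' i : ℤ, (ENNReal.ofReal |f i x|) ^ (2 : ℝ)) ^ ((1 : ℝ) / 2)) ^ p) ^ (1 / p) := by
  have hp0 : 0 < p := by linarith
  obtain ⟨C, hC, hmain⟩ := main_aux (p / 2) (by linarith)
  set D : ℝ := 2 ^ p * C + 1 with hD
  have hDpos : 0 < D := by positivity
  refine ⟨Real.toNNReal (D ^ (1 / p)), by simp; positivity, fun f hf Nk hNk lam hlam => ?_⟩
  have hcoe : ((Real.toNNReal (D ^ (1 / p)) : ℝ≥0) : ℝ≥0∞) = (ENNReal.ofReal D) ^ (1 / p) := by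
    rw [ENNReal.ofReal_rpow_of_nonneg hDpos.le (by positivity)]; rfl
  rw [hcoe, ← ENNReal.mul_rpow_of_nonneg _ _ (by positivity)]
  apply ENNReal.rpow_le_rpow _ (by positivity)
  have hS : ∀ x, ((∑' i : ℤ, (ENNReal.ofReal |f i x|) ^ (2 : ℝ)) ^ ((1 : ℝ) / 2)) ^ p =
      (∑' i : ℤ, (ENNReal.ofReal |f i x|) ^ (2 : ℝ)) ^ (p / 2) := by
    intro x; rw [← ENNReal.rpow_mul]; congr 1; ring
  simp only [hS]
  set μ := lam / 2 with hμdef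
  have hμ : 0 < μ := by positivity
  have hlam2 : lam = 2 * μ := by rw [hμdef]; ring
  set g : ℕ → ℝ → ℝ≥0∞ := fun M x =>
    ENNReal.ofReal (jG μ (fun j : ℕ => f (-(M:ℤ) + 1 + j) x) (2 * M) ^ (p / 2)) with hg
  have hgm : ∀ M, Measurable (g M) := fun M =>
    ((jGmeas μ (fun j : ℕ => f (-(M:ℤ) + 1 + j)) (fun j => fam_meas hf _) _).pow_const _).ennreal_ofReal
  have hpt : ∀ x, (ENNReal.ofReal lam *
            (({k : ℕ | lam < |∑ i ∈ Finset.Ioc (Nk k x) (Nk (k + 1) x), f i x|}.encard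
              : ℝ≥0∞)) ^ ((1 : ℝ) / 2)) ^ p ≤
      ENNReal.ofReal (2 ^ p) * Filter.liminf (fun M => g M x) Filter.atTop := by
    intro x
    have h1 := encard_le_liminf hμ.le (fun i => f i x) (fun k => Nk k x) (fun k => hNk.2 k x)
    rw [← hlam2] at h1
    -- the monotone continuous map
    set φ : ℝ≥0∞ → ℝ≥0∞ := fun t => (ENNReal.ofReal lam * t ^ ((1:ℝ)/2)) ^ p with hφ
    have hφm : Monotone φ := by
      intro s t hst
      simp only [hφ]
      gcongr
    have hφc : Continuous φ := by
      have h1 : Continuous (fun t : ℝ≥0∞ => t ^ ((1:ℝ)/2)) := ENNReal.continuous_rpow_const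
      have h2 : Continuous (fun t : ℝ≥0∞ => ENNReal.ofReal lam * t) :=
        ENNReal.continuous_const_mul ENNReal.ofReal_ne_top
      exact ENNReal.continuous_rpow_const.comp (h2.comp h1)
    refine (hφm h1).trans ?_
    rw [hφm.map_liminf_of_continuousAt _ hφc.continuousAt, ← ENNReal.liminf_const_mul_of_ne_top ENNReal.ofReal_ne_top]
    refine Filter.liminf_le_liminf (Filter.Eventually.of_forall fun M => ?_)
    simp only [hφ, hg, Function.comp]
    set K := (jst μ (fun j : ℕ => f (-(M:ℤ) + 1 + j) x) (2 * M)).2 with hK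
    have hG : μ ^ 2 * K ≤ jG μ (fun j : ℕ => f (-(M:ℤ) + 1 + j) x) (2 * M) := by
      rw [jG, ← hK]; nlinarith [sq_nonneg (jst μ (fun j : ℕ => f (-(M:ℤ) + 1 + j) x) (2 * M)).1]
    rw [← ENNReal.ofReal_mul (by positivity), ← ENNReal.ofReal_natCast,
      ENNReal.ofReal_rpow_of_nonneg (by positivity) (by positivity),
      ← ENNReal.ofReal_mul hlam.le, ENNReal.ofReal_rpow_of_nonneg (by positivity) hp0.le]
    apply ENNReal.ofReal_le_ofReal
    calc (lam * (K:ℝ) ^ ((1:ℝ)/2)) ^ p = 2 ^ p * (μ ^ 2 * K) ^ (p / 2) := by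
          rw [hlam2, mul_assoc, Real.mul_rpow (by norm_num) (by positivity)]
          congr 1
          rw [Real.mul_rpow (by positivity) (by positivity), Real.mul_rpow (by positivity) (by positivity),
            ← Real.rpow_mul (by positivity), ← Real.rpow_natCast μ 2, ← Real.rpow_mul hμ.le]
          congr 2 <;> push_cast <;> ring
      _ ≤ _ := by gcongr
  calc _ ≤ ∫⁻ x, ENNReal.ofReal (2 ^ p) * Filter.liminf (fun M => g M x) Filter.atTop :=
        lintegral_mono hpt
    _ = ENNReal.ofReal (2 ^ p) * ∫⁻ x, Filter.liminf (fun M => g M x) Filter.atTop :=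
        lintegral_const_mul' _ _ ENNReal.ofReal_ne_top
    _ ≤ ENNReal.ofReal (2 ^ p) * Filter.liminf (fun M => ∫⁻ x, g M x) Filter.atTop := by
        gcongr; exact lintegral_liminf_le hgm
    _ ≤ ENNReal.ofReal (2 ^ p) * (ENNReal.ofReal C *
          ∫⁻ x, (∑' i : ℤ, (ENNReal.ofReal |f i x|) ^ (2 : ℝ)) ^ (p / 2)) := by
        gcongr
        apply Filter.liminf_le_of_le
        · exact Filter.isBounded_ge_of_bot
        intro b hb
        obtain ⟨M, hM⟩ := hb.exists
        exact hM.trans (hmain f hf μ hμ.le _ _)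
    _ ≤ _ := by
        rw [← mul_assoc, ← ENNReal.ofReal_mul (by positivity)]
        gcongr
        rw [hD]; linarith

end
end
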